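/- arXiv:2010.10414 — 2 statements merged into one kernel-verified Lean document; each statement's English description precedes it below -/
import Mathlib

section
/- Let A be a group and let K be a finitely generated residually finite group that admits a decomposition as a free product of two nontrivial groups. Suppose S is a finitely presented subdirect product of A × K whose intersection with {1} × K is nontrivial. Then L = S ∩ (A × {1}), regarded as a subgroup of A, is finitely generated. -/
/-- A subgroup `S` of `A × K` is a subdirect product if both coordinate
projections map `S` onto `A` and onto `K`. -/
def IsSubdirect {A K : Type*} [Group A] [Group K] (S : Subgroup (A × K)) : Prop :=
  S.map (MonoidHom.fst A K) = ⊤ ∧ S.map (MonoidHom.snd A K) = ⊤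

/-- A group is residually finite if every nontrivial element is detected by a
homomorphism to a finite group. -/
def ResiduallyFinite (G : Type*) [Group G] : Prop :=
  ∀ g : G, g ≠ 1 → ∃ (Q : Type) (_ : Group Q) (_ : Finite Q) (π : G →* Q), π g ≠ 1

/-- A group admits a decomposition as a free product of two nontrivial groups. -/
def HasFreeProductDecomp (G : Type*) [Group G] : Prop :=
  ∃ (B C : Type) (_ : Group B) (_ : Group C) (_ : Nontrivial B) (_ : Nontrivial C),
    Nonempty (G ≃* Monoid.Coprod B C)

/-- A group is finitely presented: a finitely generated free group surjects onto it with
kernel the normal closure of finitely many relators. -/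
def FinitelyPresentedGroup (G : Type*) [Group G] : Prop :=
  ∃ (n : ℕ) (rels : Finset (FreeGroup (Fin n))) (f : FreeGroup (Fin n) →* G),
    Function.Surjective f ∧ f.ker = Subgroup.normalClosure (rels : Set (FreeGroup (Fin n)))

/-!
Let `N` be the kernel of the projection of `S` to the free product `K = ∗ G i`. Then `S` is the
amalgam along `N` of the preimages of the free factors, hence the limit of their amalgams `S_F`
along the subgroups `⟨F⟩` generated by the finite subsets `F` of `N`. Since `S` is finitely
presented, for `F` large enough there is a homomorphism `σ : S → S_F` which is the inclusion on as
much of the preimages of the free factors as one needs. The subgroup `S ∩ ({1} × K)` is not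
contained in `N` and commutes with it, so, being normal, it contains an element `x` whose image in
`K` is cyclically reduced of length at least two. Then `σ x` is cyclically reduced in `S_F`, and
an element of a vertex group of `S_F` which commutes with it lies in the edge group `⟨F⟩`. This
forces `N = ⟨F⟩`.
-/

open Filter Function Monoid

section AlternatingProducts

variable {ι G : Type*} [Group G] {H : ι → Subgroup G} {L : Subgroup G} {i j k l : ι} {x y : G}

/-- `IsAltProd H L i j x` says that `x` is a nonempty product of elements of the sets `H m \ L`,
consecutive factors being taken from different sets, the first one from `H i \ L` and the last one
from `H j \ L`. For an amalgam of the `H m` along `L` these are the reduced forms. -/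
inductive IsAltProd (H : ι → Subgroup G) (L : Subgroup G) : ι → ι → G → Prop
  | single {i : ι} {x : G} (hx : x ∈ H i) (hxL : x ∉ L) : IsAltProd H L i i x
  | cons {i j k : ι} {x y : G} (hx : x ∈ H i) (hxL : x ∉ L) (hik : i ≠ k)
      (hy : IsAltProd H L k j y) : IsAltProd H L i j (x * y)

namespace IsAltProd

theorem append (hx : IsAltProd H L i j x) (hjk : j ≠ k) (hy : IsAltProd H L k l y) :
    IsAltProd H L i l (x * y) := by
  induction hx with
  | single hx hxL => exact cons hx hxL hjk hy
  | cons hx hxL hik _ ih => exact mul_assoc _ _ y ▸ cons hx hxL hik (ih hjk)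

theorem inv (hx : IsAltProd H L i j x) : IsAltProd H L j i x⁻¹ := by
  induction hx with
  | single hx hxL => exact single (inv_mem hx) (by rwa [inv_mem_iff])
  | cons hx hxL hik _ ih =>
    rw [mul_inv_rev]
    exact ih.append hik.symm (single (inv_mem hx) (by rwa [inv_mem_iff]))

theorem conj (hx : IsAltProd H L i j x) (hjk : j ≠ k) (hy : y ∈ H k) (hyL : y ∉ L) :
    IsAltProd H L i i (x * y * x⁻¹) :=
  (hx.append hjk (single hy hyL)).append hjk.symm hx.inv

theorem eventually_map {α : Type*} {F : Filter α} {G' : α → Type*} [∀ a, Group (G' a)]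
    {H' : ∀ a, ι → Subgroup (G' a)} {L' : ∀ a, Subgroup (G' a)} {σ : ∀ a, G →* G' a}
    (hσ : ∀ i, ∀ x ∈ H i, x ∉ L → ∀ᶠ a in F, σ a x ∈ H' a i ∧ σ a x ∉ L' a)
    (hx : IsAltProd H L i j x) : ∀ᶠ a in F, IsAltProd (H' a) (L' a) i j (σ a x) := by
  induction hx with
  | single hx hxL => exact (hσ _ _ hx hxL).mono fun a ha => single ha.1 ha.2
  | cons hx hxL hik _ ih =>
    filter_upwards [hσ _ _ hx hxL, ih] with a ha hy
    exact map_mul (σ a) _ _ ▸ cons ha.1 ha.2 hik hy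

theorem notMem_of_ne (hHL : ∀ ⦃i j x⦄, IsAltProd H L i j x → x ∉ L) (hx : IsAltProd H L i j x)
    (hjk : j ≠ k) : x ∉ H k := fun hxk =>
  hHL (hx.append hjk (single (inv_mem hxk) (by simpa using hHL hx))) (by simp)

/-- If `y ∉ L` and `k ∉ {i, j}`, then `x * y * x⁻¹` is an alternating product that starts and ends
in `H i`, so it differs from `y`. If `k = i`, the first factor of `x` is moved over to `y`. -/
theorem mem_of_commute (hHL : ∀ ⦃i j x⦄, IsAltProd H L i j x → x ∉ L) (hij : i ≠ j)
    (hx : IsAltProd H L i j x) (hy : y ∈ H k) (hxy : Commute x y) : y ∈ L := by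
  wlog hjk : j ≠ k generalizing i j x
  · obtain rfl := not_not.1 hjk
    exact this hij.symm hx.inv hxy.inv_left hij
  by_contra hyL
  obtain rfl | hik := eq_or_ne i k
  · cases hx with
    | single => exact hij rfl
    | @cons _ _ m a b ha _ him hb =>
      have hconj : b * y * b⁻¹ = a⁻¹ * y * a := by
        have := hxy.eq
        rw [mul_inv_eq_iff_eq_mul]
        simp only [mul_assoc] at this ⊢
        rw [← this, inv_mul_cancel_left]
      refine (hb.conj hjk hy hyL).notMem_of_ne hHL him.symm ?_
      exact hconj ▸ mul_mem (mul_mem (inv_mem ha) hy) ha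
  · have hconj := hx.conj hjk hy hyL
    rw [hxy.eq, mul_inv_cancel_right] at hconj
    exact hconj.notMem_of_ne hHL hik hy

end IsAltProd

end AlternatingProducts

section FiniteGeneration

variable {D S α : Type*} [Group D] [Group S] {l : Filter α}

theorem FinitelyPresentedGroup.isFinitelyPresented (hS : FinitelyPresentedGroup S) :
    Group.IsFinitelyPresented S :=
  let ⟨n, rels, f, hf, hker⟩ := hS
  ⟨n, f, hf, rels, rels.finite_toSet, hker.symm⟩

theorem eventually_eq_top_of_eventually_mem [Group.FG S] {P : α → Subgroup S}
    (hP : ∀ x, ∀ᶠ a in l, x ∈ P a) : ∀ᶠ a in l, P a = ⊤ := by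
  obtain ⟨T, hT, hTfin⟩ := Group.fg_iff.1 ‹Group.FG S›
  filter_upwards [(eventually_all_finite hTfin).2 fun x _ => hP x] with a ha
  rwa [eq_top_iff, ← hT, Subgroup.closure_le]

/-- The elements killed by `q a` for all `a` far enough along `l`: the kernel of the limit of the
homomorphisms `q a`. -/
def eventualKer {Q : α → Type*} [∀ a, Group (Q a)] (l : Filter α) (q : ∀ a, D →* Q a) :
    Subgroup D where
  carrier := {x | ∀ᶠ a in l, q a x = 1}
  one_mem' := .of_forall fun a => map_one (q a)
  mul_mem' hx hy := by filter_upwards [hx, hy] with a ha hb using by simp [ha, hb]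
  inv_mem' hx := hx.mono fun a ha => by simp [ha]

instance {Q : α → Type*} [∀ a, Group (Q a)] (l : Filter α) (q : ∀ a, D →* Q a) :
    (eventualKer l q).Normal :=
  ⟨fun _ hx g => Eventually.mono hx fun a ha => by simp [ha]⟩

/-- Far enough along `l`, the map `q a` kills lifts to `D` of the finitely many relators of `S`. -/
theorem exists_hom_eventually_eq [Group.IsFinitelyPresented S] {Q : α → Type*} [∀ a, Group (Q a)]
    {p : D →* S} (hp : Surjective p) {q : ∀ a, D →* Q a} (hq : p.ker ≤ eventualKer l q) :
    ∃ σ : ∀ a, S →* Q a, ∀ d, ∀ᶠ a in l, σ a (p d) = q a d := by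
  obtain ⟨n, f, hf, rels, hfin, hker⟩ := Group.IsFinitelyPresented.out (G := S)
  let f' : FreeGroup (Fin n) →* D := FreeGroup.lift fun k => surjInv hp (f (.of k))
  have hpf : p.comp f' = f := by
    ext k
    simp [f', surjInv_eq hp]
  have hrels : ∀ᶠ a in l, f.ker ≤ ((q a).comp f').ker := by
    have hmem : ∀ r ∈ rels, ∀ᶠ a in l, q a (f' r) = 1 := fun r hr => hq <| by
      rw [MonoidHom.mem_ker, ← MonoidHom.comp_apply, hpf, ← MonoidHom.mem_ker, ← hker]
      exact Subgroup.subset_normalClosure hr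
    filter_upwards [(eventually_all_finite hfin).2 hmem] with a ha
    exact hker ▸ Subgroup.normalClosure_le_normal ha
  have hlift : ∀ a, ∃ σ : S →* Q a, f.ker ≤ ((q a).comp f').ker → σ.comp f = (q a).comp f' := by
    intro a
    by_cases ha : f.ker ≤ ((q a).comp f').ker
    · exact ⟨f.liftOfSurjective hf ⟨_, ha⟩, fun _ => f.liftOfRightInverse_comp _ _ _⟩
    · exact ⟨1, fun h => absurd h ha⟩
  choose σ hσ using hlift
  refine ⟨σ, fun d => ?_⟩
  obtain ⟨w, hw⟩ := hf (p d)
  have hwd : f' w * d⁻¹ ∈ p.ker := by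
    rw [MonoidHom.mem_ker, map_mul, map_inv, ← hw, ← hpf, MonoidHom.comp_apply, mul_inv_cancel]
  filter_upwards [hrels, hq hwd] with a ha hqa
  rw [map_mul, map_inv, mul_inv_eq_one] at hqa
  rw [← hw, ← hqa]
  exact DFunLike.congr_fun (hσ a ha) w

end FiniteGeneration

section FreeProduct

variable {ι : Type*} {G : ι → Type*} [∀ i, Group (G i)] {S : Type*} [Group S]

theorem iSup_range_coprodI_of : ⨆ i, (CoprodI.of (M := G) (i := i)).range = ⊤ := by
  rw [← CoprodI.range_eq_iSup, CoprodI.lift_of']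
  exact MonoidHom.range_eq_top.2 surjective_id

theorem exists_neWord_prod_mem [Nontrivial ι] [∀ i, Nontrivial (G i)] {M : Subgroup (CoprodI G)}
    [hM : M.Normal] (hbot : M ≠ ⊥) :
    ∃ i j, i ≠ j ∧ ∃ w : CoprodI.NeWord G i j, w.prod ∈ M := by
  classical
  obtain ⟨x, hx, hx1⟩ := M.bot_or_exists_ne_one.resolve_left hbot
  obtain ⟨i, j, w, hw⟩ := CoprodI.NeWord.of_word (CoprodI.Word.equiv x) fun h =>
    hx1 (CoprodI.Word.equiv.injective (h.trans (by simp [CoprodI.Word.equiv])))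
  have hwM : w.prod ∈ M := by
    have : w.prod = x := by
      rw [CoprodI.NeWord.prod, hw]
      exact CoprodI.Word.equiv.symm_apply_apply x
    rwa [this]
  obtain rfl | hij := eq_or_ne i j
  · obtain ⟨k, hki⟩ := exists_ne i
    obtain ⟨g, hg⟩ := exists_ne (1 : G k)
    refine ⟨k, i, hki, .append (.append (.append (.singleton g hg) hki w) hki.symm
      (.singleton g⁻¹ (inv_ne_one.2 hg))) hki w, ?_⟩
    simpa using mul_mem (hM.conj_mem _ hwM (CoprodI.of g)) hwM
  · exact ⟨i, j, hij, w, hwM⟩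

/-- The preimages of the free factors: the vertex stabilizers of the action of `S` through `π` on
the Bass–Serre tree of the free product. -/
def factorPreimage (π : S →* CoprodI G) (i : ι) : Subgroup S :=
  (CoprodI.of (M := G) (i := i)).range.comap π

variable {π : S →* CoprodI G}

theorem ker_le_factorPreimage (i : ι) : π.ker ≤ factorPreimage π i :=
  Subgroup.ker_le_comap ..

theorem iSup_factorPreimage [Nonempty ι] (hπ : Surjective π) : ⨆ i, factorPreimage π i = ⊤ := by
  have hle : π.ker ≤ ⨆ i, factorPreimage π i :=
    (ker_le_factorPreimage (Classical.arbitrary ι)).trans (le_iSup ..)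
  rw [← Subgroup.comap_map_eq_self hle, Subgroup.map_iSup]
  simp_rw [factorPreimage, Subgroup.map_comap_eq_self_of_surjective hπ, iSup_range_coprodI_of,
    Subgroup.comap_top]

theorem isAltProd_of_eq_prod (hπ : Surjective π) {i j : ι} (w : CoprodI.NeWord G i j) {x : S}
    (hx : π x = w.prod) : IsAltProd (factorPreimage π) π.ker i j x := by
  induction w generalizing x with
  | singleton g hg =>
    rw [CoprodI.NeWord.prod_singleton] at hx
    refine .single ⟨g, hx.symm⟩ fun h => hg (CoprodI.of_injective _ ?_)
    rw [← hx, map_one, MonoidHom.mem_ker.1 h]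
  | append w₁ hne w₂ ih₁ ih₂ =>
    obtain ⟨y, hy⟩ := hπ w₁.prod
    have h := (ih₁ hy).append hne (ih₂ (x := y⁻¹ * x) (by simp [hx, hy]))
    rwa [mul_inv_cancel_left] at h

theorem exists_isAltProd_mem [Nontrivial ι] [∀ i, Nontrivial (G i)] (hπ : Surjective π)
    {M : Subgroup S} [hM : M.Normal] (hMπ : ¬ M ≤ π.ker) :
    ∃ i j, i ≠ j ∧ ∃ x ∈ M, IsAltProd (factorPreimage π) π.ker i j x := by
  have := hM.map π hπ
  obtain ⟨i, j, hij, w, x, hx, hxw⟩ :=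
    exists_neWord_prod_mem (M := M.map π) (by rwa [Ne, Subgroup.map_eq_bot_iff])
  exact ⟨i, j, hij, x, hx, isAltProd_of_eq_prod hπ w hxw⟩

theorem surjective_of_forall_coprodI_of_eq {P : ι → Subgroup S} (hπ : Surjective π)
    (hP : ⨆ i, P i = ⊤) {κ : ∀ i, P i →* G i} (hκ : ∀ i p, CoprodI.of (κ i p) = π p) (i : ι) :
    Surjective (κ i) := by
  classical
  let ρ : CoprodI G →* G i := CoprodI.lift (Pi.mulSingle i (MonoidHom.id (G i)))
  have hρ : (κ i).range.comap (ρ.comp π) = ⊤ := by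
    rw [eq_top_iff, ← hP, iSup_le_iff]
    intro j p hp
    rw [Subgroup.mem_comap, MonoidHom.comp_apply, ← hκ j ⟨p, hp⟩]
    obtain rfl | hij := eq_or_ne j i
    · exact ⟨⟨p, hp⟩, (CoprodI.of_leftInverse j _).symm⟩
    · simp [ρ, Pi.mulSingle_eq_of_ne hij]
  intro g
  obtain ⟨x, hx⟩ := hπ (CoprodI.of g)
  have hg : (ρ.comp π) x ∈ (κ i).range := (hρ ▸ Subgroup.mem_top x :)
  rwa [MonoidHom.comp_apply, hx, CoprodI.of_leftInverse] at hg

/-- Over `S ⧸ Z` the map `π` has an inverse, given on each free factor by lifting to `P i`. -/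
theorem ker_le_of_inf_ker_le {P : ι → Subgroup S} (hπ : Surjective π) (hP : ⨆ i, P i = ⊤)
    (hPπ : ∀ i, P i ≤ factorPreimage π i) {Z : Subgroup S} [Z.Normal]
    (hZ : ∀ i, P i ⊓ π.ker ≤ Z) : π.ker ≤ Z := by
  let κ (i : ι) : P i →* G i :=
    (MonoidHom.ofInjective (CoprodI.of_injective i)).symm.toMonoidHom.comp
      ((π.comp (P i).subtype).codRestrict _ fun p => hPπ i p.2)
  have hκ (i : ι) (p : P i) : CoprodI.of (κ i p) = π p :=
    MonoidHom.apply_ofInjective_symm (CoprodI.of_injective i) _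
  have hker (i : ι) : (κ i).ker ≤ ((QuotientGroup.mk' Z).comp (P i).subtype).ker := by
    intro p hp
    have hpπ : π p = 1 := by rw [← hκ, MonoidHom.mem_ker.1 hp, map_one]
    simpa [MonoidHom.mem_ker] using hZ i ⟨p.2, hpπ⟩
  let f (i : ι) : G i →* S ⧸ Z :=
    (κ i).liftOfSurjective (surjective_of_forall_coprodI_of_eq hπ hP hκ i) ⟨_, hker i⟩
  have hf (i : ι) (p : P i) : f i (κ i p) = (p : S) :=
    (κ i).liftOfRightInverse_comp_apply _ _ _ p
  have heq : ((CoprodI.lift f).comp π).eqLocus (QuotientGroup.mk' Z) = ⊤ := by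
    rw [eq_top_iff, ← hP, iSup_le_iff]
    intro i p hp
    change CoprodI.lift f (π p) = (p : S ⧸ Z)
    rw [← hκ i ⟨p, hp⟩, CoprodI.lift_of, hf]
  intro x hx
  have hx' : CoprodI.lift f (π x) = (x : S ⧸ Z) := (heq ▸ Subgroup.mem_top x :)
  rwa [MonoidHom.mem_ker.1 hx, map_one, eq_comm, QuotientGroup.eq_one_iff] at hx'

/-- The coproduct of two monoids is the coproduct of the family they form. -/
def coprodMulEquivCoprodI (M : Bool → Type*) [∀ b, Monoid (M b)] :
    Coprod (M false) (M true) ≃* CoprodI M :=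
  MonoidHom.toMulEquiv (Coprod.lift CoprodI.of CoprodI.of)
    (CoprodI.lift fun | false => Coprod.inl | true => Coprod.inr)
    (by ext <;> simp) (by ext (_ | _) <;> simp)

theorem HasFreeProductDecomp.exists_mulEquiv_coprodI {K : Type*} [Group K]
    (hK : HasFreeProductDecomp K) :
    ∃ (G : Bool → Type) (_ : ∀ b, Group (G b)) (_ : ∀ b, Nontrivial (G b)),
      Nonempty (K ≃* CoprodI G) := by
  obtain ⟨B, C, hB, hC, _, _, ⟨e⟩⟩ := hK
  let G (b : Bool) : Type := cond b C B
  let hG : ∀ b, Group (G b) := fun | false => hB | true => hC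
  have hG' : ∀ b, Nontrivial (G b) := fun | false => ‹_› | true => ‹_›
  exact ⟨G, hG, hG', ⟨e.trans (coprodMulEquivCoprodI G)⟩⟩

end FreeProduct

section Pushout

variable {ι : Type*} {M : ι → Type*} {Λ : Type*} [∀ i, Group (M i)] [Group Λ]
  {φ : ∀ i, Λ →* M i} {i j : ι}

theorem IsAltProd.exists_reduced_neWord {x : PushoutI φ}
    (hx : IsAltProd (fun i => (PushoutI.of (φ := φ) i).range) (PushoutI.base φ).range i j x) :
    ∃ w : CoprodI.NeWord M i j, PushoutI.Reduced φ w.toWord ∧ PushoutI.ofCoprodI w.prod = x := by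
  have notMem_range {i : ι} {g : M i} (hg : PushoutI.of i g ∉ (PushoutI.base φ).range) :
      g ∉ (φ i).range := by
    rintro ⟨a, rfl⟩
    exact hg ⟨a, (PushoutI.of_apply_eq_base φ i a).symm⟩
  have ne_one {i : ι} {g : M i} (hg : g ∉ (φ i).range) : g ≠ 1 := fun h => hg (h ▸ one_mem _)
  induction hx with
  | single hx hxL =>
    obtain ⟨g, rfl⟩ := hx
    have hg := notMem_range hxL
    exact ⟨.singleton g (ne_one hg), by simpa [PushoutI.Reduced, CoprodI.NeWord.toWord] using hg,
      by simp⟩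
  | cons hx hxL hik _ ih =>
    obtain ⟨g, rfl⟩ := hx
    obtain ⟨w, hw, rfl⟩ := ih
    have hg := notMem_range hxL
    refine ⟨.append (.singleton g (ne_one hg)) hik w, fun p hp => ?_, by simp⟩
    obtain hp | hp := List.mem_append.1 hp
    · rwa [List.mem_singleton.1 hp]
    · exact hw p hp

theorem IsAltProd.notMem_range_base (hφ : ∀ i, Injective (φ i)) {x : PushoutI φ}
    (hx : IsAltProd (fun i => (PushoutI.of (φ := φ) i).range) (PushoutI.base φ).range i j x) :
    x ∉ (PushoutI.base φ).range := by
  obtain ⟨w, hw, rfl⟩ := hx.exists_reduced_neWord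
  intro h
  exact w.toList_ne_nil (congrArg CoprodI.Word.toList (hw.eq_empty_of_mem_range hφ h))

theorem iSup_range_pushoutI_of [Nonempty ι] : ⨆ i, (PushoutI.of (φ := φ) i).range = ⊤ := by
  rw [eq_top_iff]
  rintro x -
  induction x using PushoutI.induction_on with
  | of i g => exact Subgroup.mem_iSup_of_mem i ⟨g, rfl⟩
  | base a =>
    let i := Classical.arbitrary ι
    exact Subgroup.mem_iSup_of_mem i ⟨φ i a, PushoutI.of_apply_eq_base φ i a⟩
  | mul x y hx hy => exact mul_mem hx hy

theorem normal_range_pushoutI_base (hφ : ∀ i, (φ i).range.Normal) :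
    (PushoutI.base φ).range.Normal := by
  refine ⟨fun z hz g => ?_⟩
  induction g using PushoutI.induction_on generalizing z with
  | of i g =>
    obtain ⟨a, rfl⟩ := hz
    obtain ⟨b, hb⟩ := (hφ i).conj_mem (φ i a) ⟨a, rfl⟩ g
    refine ⟨b, ?_⟩
    rw [← PushoutI.of_apply_eq_base φ i, hb, map_mul, map_mul, map_inv, PushoutI.of_apply_eq_base]
  | base a => exact mul_mem (mul_mem ⟨a, rfl⟩ hz) (inv_mem ⟨a, rfl⟩)
  | mul g₁ g₂ h₁ h₂ => simpa [mul_assoc] using h₁ _ (h₂ z hz)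

theorem ker_pushoutI_ofCoprodI_le [Nonempty ι] {E : Subgroup (CoprodI M)} [E.Normal]
    (hE : ∀ i j a, CoprodI.of (φ i a) / CoprodI.of (φ j a) ∈ E) :
    (PushoutI.ofCoprodI (φ := φ)).ker ≤ E := by
  obtain ⟨j⟩ := ‹Nonempty ι›
  let f : PushoutI φ →* CoprodI M ⧸ E :=
    PushoutI.lift (fun i => (QuotientGroup.mk' E).comp CoprodI.of)
      ((QuotientGroup.mk' E).comp (CoprodI.of.comp (φ j)))
      fun i => MonoidHom.ext fun a => (QuotientGroup.eq_iff_div_mem).2 (hE i j a)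
  have hf : f.comp PushoutI.ofCoprodI = QuotientGroup.mk' E := by
    ext i g
    simp [f]
  intro x hx
  rw [← QuotientGroup.ker_mk' E, ← hf, MonoidHom.mem_ker, MonoidHom.comp_apply,
    MonoidHom.mem_ker.1 hx, map_one]

end Pushout

section Amalgam

variable {ι S : Type*} [Group S] {H : ι → Subgroup S} {L N : Subgroup S}

/-- The amalgam of the subgroups `H i` of `S` along a subgroup `L` contained in all of them. -/
abbrev Amalgam (h : ∀ i, L ≤ H i) : Type _ := PushoutI fun i => Subgroup.inclusion (h i)

namespace Amalgam

/-- The inclusion of `H i` into the amalgam. -/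
abbrev of (h : ∀ i, L ≤ H i) (i : ι) : H i →* Amalgam h :=
  PushoutI.of (φ := fun i => Subgroup.inclusion (h i)) i

/-- The inclusion of `L` into the amalgam. -/
abbrev base (h : ∀ i, L ≤ H i) : L →* Amalgam h := PushoutI.base _

/-- The homomorphism from the amalgam to `S` induced by the inclusions of the `H i`. -/
def toGroup (h : ∀ i, L ≤ H i) : Amalgam h →* S :=
  PushoutI.lift (fun i => (H i).subtype) L.subtype fun _ => rfl

variable {h : ∀ i, L ≤ H i} {i j : ι} {x : S}

theorem toGroup_of (y : H i) : toGroup h (of h i y) = y := PushoutI.lift_of ..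

theorem toGroup_base (y : L) : toGroup h (base h y) = y := PushoutI.lift_base ..

theorem toGroup_comp_ofCoprodI :
    (toGroup h).comp PushoutI.ofCoprodI = CoprodI.lift fun i => (H i).subtype := by
  ext i y
  simpa using toGroup_of y

theorem of_eq_base (hx : x ∈ L) (i : ι) : of h i ⟨x, h i hx⟩ = base h ⟨x, hx⟩ :=
  PushoutI.of_apply_eq_base (fun i => Subgroup.inclusion (h i)) i ⟨x, hx⟩

theorem of_mem_range_base {y : H i} : of h i y ∈ (base h).range ↔ (y : S) ∈ L := by
  constructor
  · rintro ⟨z, hz⟩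
    rw [← toGroup_of (h := h), ← hz, toGroup_base]
    exact z.2
  · exact fun hy => ⟨⟨y, hy⟩, (of_eq_base hy i).symm⟩

theorem notMem_range_base_of_isAltProd {y : Amalgam h}
    (hy : IsAltProd (fun i => (of h i).range) (base h).range i j y) : y ∉ (base h).range :=
  hy.notMem_range_base fun i => Subgroup.inclusion_injective (h i)

end Amalgam

theorem surjective_lift_subtype (hH : ⨆ i, H i = ⊤) :
    Surjective (CoprodI.lift fun i => (H i).subtype) := by
  rw [← MonoidHom.range_eq_top, CoprodI.range_eq_iSup, ← hH]
  simp

theorem ker_lift_subtype_le_eventualKer [Nonempty ι] {hN : ∀ i, N ≤ H i}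
    (hinj : Injective (Amalgam.toGroup hN)) {α : Type*} {l : Filter α} {L : α → Subgroup S}
    (hL : ∀ a i, L a ≤ H i) (hlim : ∀ x ∈ N, ∀ᶠ a in l, x ∈ L a) :
    (CoprodI.lift fun i => (H i).subtype).ker ≤
      eventualKer l fun a => (PushoutI.ofCoprodI : _ →* Amalgam (hL a)) := by
  have hker : (CoprodI.lift fun i => (H i).subtype).ker =
      (PushoutI.ofCoprodI : _ →* Amalgam hN).ker := by
    rw [← Amalgam.toGroup_comp_ofCoprodI (h := hN), MonoidHom.ker_comp_of_injective _ _ hinj]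
  rw [hker]
  refine ker_pushoutI_ofCoprodI_le fun i j x => ?_
  filter_upwards [hlim x x.2] with a ha
  rw [map_div, PushoutI.ofCoprodI_of, PushoutI.ofCoprodI_of, div_eq_one]
  exact (Amalgam.of_eq_base ha i).trans (Amalgam.of_eq_base ha j).symm

/-- The elements of `H i` on which `σ` is the inclusion of `H i` into the amalgam. -/
def agreeSubgroup {h : ∀ i, L ≤ H i} (σ : S →* Amalgam h) (i : ι) : Subgroup S :=
  ((σ.comp (H i).subtype).eqLocus (Amalgam.of h i)).map (H i).subtype

section Agree

variable {h : ∀ i, L ≤ H i} {σ : S →* Amalgam h} {x : S}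

theorem mem_agreeSubgroup {i : ι} :
    x ∈ agreeSubgroup σ i ↔ ∃ hx : x ∈ H i, σ x = Amalgam.of h i ⟨x, hx⟩ :=
  ⟨fun ⟨y, hy, hyx⟩ => hyx ▸ ⟨y.2, hy⟩, fun ⟨hx, hσx⟩ => ⟨⟨x, hx⟩, hσx, rfl⟩⟩

theorem agreeSubgroup_inf_le (i j : ι) : agreeSubgroup σ i ⊓ L ≤ agreeSubgroup σ j := by
  rintro x ⟨hx, hxL⟩
  obtain ⟨_, hσx⟩ := mem_agreeSubgroup.1 hx
  exact mem_agreeSubgroup.2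
    ⟨h j hxL, hσx.trans ((Amalgam.of_eq_base hxL i).trans (Amalgam.of_eq_base hxL j).symm)⟩

theorem agreeSubgroup_inf_centralizer_le {i j : ι} (hij : i ≠ j)
    (hx : IsAltProd (fun m => (Amalgam.of h m).range) (Amalgam.base h).range i j (σ x)) (k : ι) :
    agreeSubgroup σ k ⊓ Subgroup.centralizer {x} ≤ L := by
  rintro y ⟨hy, hxy⟩
  obtain ⟨hyk, hσy⟩ := mem_agreeSubgroup.1 hy
  have hcomm : Commute x y := (Subgroup.mem_centralizer_singleton_iff.1 hxy).symm
  refine Amalgam.of_mem_range_base.1 (hσy ▸ ?_ : Amalgam.of h k ⟨y, hyk⟩ ∈ _)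
  exact IsAltProd.mem_of_commute (fun _ _ _ => Amalgam.notMem_range_base_of_isAltProd) hij hx
    ⟨_, hσy.symm⟩ (hcomm.map σ)

end Agree

section EventuallyAgree

variable {α : Type*} {l : Filter α} {L : α → Subgroup S} {h : ∀ a i, L a ≤ H i}
  {σ : ∀ a, S →* Amalgam (h a)}

theorem eventually_iSup_agreeSubgroup_eq_top [Group.FG S] (hH : ⨆ i, H i = ⊤)
    (hσ : ∀ i x (hx : x ∈ H i), ∀ᶠ a in l, σ a x = Amalgam.of (h a) i ⟨x, hx⟩) :
    ∀ᶠ a in l, ⨆ i, agreeSubgroup (σ a) i = ⊤ := by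
  refine eventually_eq_top_of_eventually_mem fun x => ?_
  have hx : x ∈ ⨆ i, H i := hH ▸ Subgroup.mem_top x
  induction hx using Subgroup.iSup_induction' with
  | hp i x hx =>
    filter_upwards [hσ i x hx] with a ha
    exact Subgroup.mem_iSup_of_mem i (mem_agreeSubgroup.2 ⟨hx, ha⟩)
  | h1 => exact .of_forall fun a => one_mem _
  | hmul x y _ _ hx hy => filter_upwards [hx, hy] with a hxa hya using mul_mem hxa hya

theorem IsAltProd.eventually_amalgam {i j : ι} {x : S} (hx : IsAltProd H N i j x)
    (hσ : ∀ i x (hx : x ∈ H i), ∀ᶠ a in l, σ a x = Amalgam.of (h a) i ⟨x, hx⟩)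
    (hLN : ∀ a, L a ≤ N) :
    ∀ᶠ a in l, IsAltProd (fun m => (Amalgam.of (h a) m).range) (Amalgam.base (h a)).range i j
      (σ a x) := by
  refine hx.eventually_map fun m y hy hyN => ?_
  filter_upwards [hσ m y hy] with a ha
  rw [ha, Amalgam.of_mem_range_base]
  exact ⟨⟨_, rfl⟩, fun hyL => hyN (hLN a hyL)⟩

end EventuallyAgree

end Amalgam

section Kernel

theorem subgroup_fg_map {S T : Type*} [Group S] [Group T] {P : Subgroup S} (f : S →* T)
    (hP : P.FG) : (P.map f).FG :=
  (Subgroup.fg_iff_submonoid_fg _).2 (((Subgroup.fg_iff_submonoid_fg P).1 hP).map f)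

variable {ι : Type*} {G : ι → Type*} [∀ i, Group (G i)] {S : Type*} [Group S]
  {π : S →* CoprodI G}

/-- All edge stabilizers of the action of `S` on the Bass–Serre tree of the free product are equal
to `π.ker`, so `S` is the amalgam of the vertex stabilizers along `π.ker`. -/
theorem injective_toGroup_factorPreimage [Nonempty ι] (hπ : Surjective π) :
    Injective (Amalgam.toGroup (ker_le_factorPreimage (π := π))) := by
  let θ := Amalgam.toGroup (ker_le_factorPreimage (π := π))
  have hθ : Surjective θ := by
    refine .of_comp (g := PushoutI.ofCoprodI) ?_
    rw [← MonoidHom.coe_comp, Amalgam.toGroup_comp_ofCoprodI]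
    exact surjective_lift_subtype (iSup_factorPreimage hπ)
  have hnormal : (Amalgam.base (ker_le_factorPreimage (π := π))).range.Normal :=
    normal_range_pushoutI_base fun i => by
      rw [Subgroup.inclusion_range]
      infer_instance
  have hker : (π.comp θ).ker ≤ (Amalgam.base (ker_le_factorPreimage (π := π))).range := by
    refine ker_le_of_inf_ker_le (π.coe_comp θ ▸ hπ.comp hθ) iSup_range_pushoutI_of ?_ ?_
    · rintro i _ ⟨y, rfl⟩
      rw [factorPreimage, Subgroup.mem_comap, MonoidHom.comp_apply, Amalgam.toGroup_of]
      exact y.2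
    · rintro i _ ⟨⟨y, rfl⟩, hy⟩
      refine Amalgam.of_mem_range_base.2 ?_
      simpa [MonoidHom.mem_ker, θ, Amalgam.toGroup_of] using hy
  refine (injective_iff_map_eq_one _).2 fun x hx => ?_
  obtain ⟨y, rfl⟩ := hker (show x ∈ (π.comp θ).ker by simp [MonoidHom.mem_ker, θ, hx])
  rw [Amalgam.toGroup_base] at hx
  rw [OneMemClass.coe_eq_one.1 hx, map_one]

theorem ker_le_of_iSup_agreeSubgroup_eq_top (hπ : Surjective π) {L : Subgroup S}
    {h : ∀ i, L ≤ factorPreimage π i} {σ : S →* Amalgam h} (hσ : ⨆ i, agreeSubgroup σ i = ⊤)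
    {x : S} (hxN : x ∈ Subgroup.centralizer (π.ker : Set S)) {i j : ι} (hij : i ≠ j)
    (hx : IsAltProd (fun m => (Amalgam.of h m).range) (Amalgam.base h).range i j (σ x)) :
    π.ker ≤ L := by
  have hN : π.ker ≤ Subgroup.centralizer {x} :=
    fun y hy => Subgroup.mem_centralizer_singleton_iff.2 (hxN y hy)
  have hL (k : ι) : agreeSubgroup σ k ⊓ π.ker ≤ L :=
    (inf_le_inf_left _ hN).trans (agreeSubgroup_inf_centralizer_le hij hx k)
  have hle (k m : ι) : agreeSubgroup σ k ⊓ π.ker ≤ agreeSubgroup σ m ⊓ π.ker :=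
    le_inf ((le_inf inf_le_left (hL k)).trans (agreeSubgroup_inf_le k m)) inf_le_right
  have hnormal : (agreeSubgroup σ i ⊓ π.ker).Normal := by
    rw [← Subgroup.normalizer_eq_top_iff, eq_top_iff, ← hσ, iSup_le_iff]
    intro k
    rw [(hle i k).antisymm (hle k i)]
    exact (le_inf Subgroup.le_normalizer Subgroup.le_normalizer_of_normal).trans
      Subgroup.inf_normalizer_le_normalizer_inf
  have hPπ (k : ι) : agreeSubgroup σ k ≤ factorPreimage π k :=
    fun y hy => (mem_agreeSubgroup.1 hy).1
  exact (ker_le_of_inf_ker_le hπ hσ hPπ fun k => hle k i).trans (hL i)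

theorem ker_fg_of_not_centralizer_le [Nontrivial ι] [∀ i, Nontrivial (G i)]
    [Group.IsFinitelyPresented S] (hπ : Surjective π)
    (hcent : ¬ Subgroup.centralizer (π.ker : Set S) ≤ π.ker) : π.ker.FG := by
  have : Group.FG S := by
    obtain ⟨_, f, hf, _⟩ := Group.IsFinitelyPresented.out (G := S)
    exact Group.fg_of_surjective hf
  let L (F : Finset π.ker) : Subgroup S := (Subgroup.closure (F : Set π.ker)).map π.ker.subtype
  have hL (F : Finset π.ker) : L F ≤ π.ker := Subgroup.map_subtype_le _
  have h (F : Finset π.ker) (i : ι) : L F ≤ factorPreimage π i :=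
    (hL F).trans (ker_le_factorPreimage i)
  have hlim : ∀ x ∈ π.ker, ∀ᶠ F in atTop, x ∈ L F := fun x hx => by
    filter_upwards [eventually_ge_atTop {⟨x, hx⟩}] with F hF
    exact ⟨⟨x, hx⟩, Subgroup.subset_closure (Finset.singleton_subset_iff.1 hF), rfl⟩
  obtain ⟨σ, hσ⟩ := exists_hom_eventually_eq (surjective_lift_subtype (iSup_factorPreimage hπ))
    (ker_lift_subtype_le_eventualKer (injective_toGroup_factorPreimage hπ) h hlim)
  have hagree (i : ι) (x : S) (hx : x ∈ factorPreimage π i) :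
      ∀ᶠ F in atTop, σ F x = Amalgam.of (h F) i ⟨x, hx⟩ := by
    simpa using hσ (CoprodI.of (i := i) ⟨x, hx⟩)
  have hgen := eventually_iSup_agreeSubgroup_eq_top (iSup_factorPreimage hπ) hagree
  obtain ⟨i, j, hij, x, hxN, hx⟩ := exists_isAltProd_mem hπ hcent
  have halt := hx.eventually_amalgam hagree hL
  obtain ⟨F, hFgen, hFalt⟩ := (hgen.and halt).exists
  have heq : π.ker = L F :=
    (ker_le_of_iSup_agreeSubgroup_eq_top hπ hFgen hxN hij hFalt).antisymm (hL F)
  rw [heq]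
  exact subgroup_fg_map π.ker.subtype ⟨F, rfl⟩

end Kernel

section LeftFiber

variable {A K : Type*} [Group A] [Group K] {S : Subgroup (A × K)}

theorem comap_inl_eq_map_ker : S.comap (MonoidHom.inl A K) =
    ((MonoidHom.snd A K).comp S.subtype).ker.map ((MonoidHom.fst A K).comp S.subtype) := by
  ext a
  simp [MonoidHom.mem_ker]

theorem not_centralizer_ker_snd_le (hK : S.comap (MonoidHom.inr A K) ≠ ⊥) :
    ¬ Subgroup.centralizer (((MonoidHom.snd A K).comp S.subtype).ker : Set S) ≤
      ((MonoidHom.snd A K).comp S.subtype).ker := by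
  obtain ⟨n, hn, hn1⟩ := (S.comap (MonoidHom.inr A K)).bot_or_exists_ne_one.resolve_left hK
  refine fun hle => hn1 (hle (x := ⟨(1, n), hn⟩) fun y (hy : (y : A × K).2 = 1) => ?_)
  ext <;> simp [hy]

theorem leftFiber_fg_of_subdirect_general {ι : Type*} [Nontrivial ι] {G : ι → Type*}
    [∀ i, Group (G i)] [∀ i, Nontrivial (G i)] (e : K ≃* CoprodI G)
    (hsnd : S.map (MonoidHom.snd A K) = ⊤) (hS : FinitelyPresentedGroup S)
    (hK : S.comap (MonoidHom.inr A K) ≠ ⊥) : (S.comap (MonoidHom.inl A K)).FG := by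
  have := hS.isFinitelyPresented
  let p : S →* K := (MonoidHom.snd A K).comp S.subtype
  have hp : Surjective p := by
    rw [← MonoidHom.range_eq_top, MonoidHom.range_comp, Subgroup.range_subtype, hsnd]
  have hker : (e.toMonoidHom.comp p).ker = p.ker := MonoidHom.ker_mulEquiv_comp p e
  rw [comap_inl_eq_map_ker]
  refine subgroup_fg_map _ (hker ▸ ker_fg_of_not_centralizer_le (e.surjective.comp hp) ?_)
  exact hker ▸ not_centralizer_ker_snd_le hK

end LeftFiber

theorem leftFiber_fg_of_subdirect
    {A K : Type} [Group A] [Group K]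
    (hfgK : Group.FG K) (hrfK : ResiduallyFinite K) (hfpK : HasFreeProductDecomp K)
    (S : Subgroup (A × K)) (hsub : IsSubdirect S) (hS : FinitelyPresentedGroup S)
    (hK : S.comap (MonoidHom.inr A K) ≠ ⊥) :
    (S.comap (MonoidHom.inl A K)).FG := by
  obtain ⟨G, _, _, ⟨e⟩⟩ := hfpK.exists_mulEquiv_coprodI
  exact leftFiber_fg_of_subdirect_general e hsub.2 hS hK
end

section
/- Let P₄¹ = ⟨a, b, c, d⟩ and P₄² = ⟨a′, b′, c′, d′⟩ be two copies of the right-angled Artin group P₄, and let f : P₄¹ × P₄² → ℤ be the homomorphism defined by f(a) = f(b) = f(d) = 1, f(c) = 0, and f(a′) = f(b′) = f(c′) = f(d′) = 1. Let S be the kernel of f. Then for every n ≥ 0 the homology group H_n(S; ℤ) (group homology with trivial integer coefficients) is a finitely generated abelian group. -/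
section BarHomology

variable (G : Type) [Group G]

/-- The `n`-th inhomogeneous chain group of `G` with `ℤ` coefficients: the free abelian
group on `n`-tuples of elements of `G`. -/
abbrev barChain (n : ℕ) : Type := (Fin n → G) →₀ ℤ

/-- The `i`-th face of an `(n+1)`-tuple: for `i = 0` drop the first entry, for
`1 ≤ i ≤ n` multiply the `i`-th and `(i+1)`-st entries, and for `i = n + 1` drop the
last entry. -/
def barFace {n : ℕ} (i : Fin (n + 2)) (g : Fin (n + 1) → G) : Fin n → G :=
  fun j =>
    if (j : ℕ) + 1 < (i : ℕ) then g j.castSucc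
    else if (j : ℕ) + 1 = (i : ℕ) then g j.castSucc * g j.succ
    else g j.succ

/-- The standard differential of the inhomogeneous chain complex computing the group
homology `H_*(G; ℤ)`:
`d(g₁,…,g_{n+1}) = (g₂,…,g_{n+1}) + ∑_{i=1}^{n} (-1)^i (g₁,…,gᵢg_{i+1},…,g_{n+1})
  + (-1)^{n+1} (g₁,…,gₙ)`. -/
noncomputable def barD (n : ℕ) : barChain G (n + 1) →ₗ[ℤ] barChain G n :=
  Finsupp.lift (barChain G n) ℤ (Fin (n + 1) → G)
    (fun g => ∑ i : Fin (n + 2),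
      ((-1 : ℤ) ^ (i : ℕ)) • Finsupp.single (barFace G i g) (1 : ℤ))

/-- The `n`-cycles: all of `C₀` in degree `0`, and the kernel of the outgoing
differential in positive degrees. -/
noncomputable def barCycles : (n : ℕ) → Submodule ℤ (barChain G n)
  | 0 => ⊤
  | (k + 1) => LinearMap.ker (barD G k)

/-- The `n`-th group homology `H_n(G; ℤ)` of `G` with trivial integer coefficients:
`n`-cycles modulo `n`-boundaries in the inhomogeneous chain complex. -/
def groupHomologyZ (n : ℕ) : Type :=
  barCycles G n ⧸ Submodule.comap (barCycles G n).subtype (LinearMap.range (barD G n))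

noncomputable instance (n : ℕ) : AddCommGroup (groupHomologyZ G n) := by
  unfold groupHomologyZ; infer_instance

end BarHomology

/-- The commutation relator `[g_i, g_j]` in the free group on four generators. -/
def commRel (i j : Fin 4) : FreeGroup (Fin 4) :=
  FreeGroup.of i * FreeGroup.of j * (FreeGroup.of i)⁻¹ * (FreeGroup.of j)⁻¹

/-- The defining relators of the right-angled Artin group
`P₄ = ⟨a, b, c, d ∣ ab = ba, bc = cb, cd = dc⟩` (with `a, b, c, d` indexed by `0, 1, 2, 3`). -/
def p4Rels : Set (FreeGroup (Fin 4)) := {commRel 0 1, commRel 1 2, commRel 2 3}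

/-- The right-angled Artin group on the path with four vertices. -/
abbrev P4 : Type := PresentedGroup p4Rels

/-!
Let `G` be the right-angled Artin group of a graph `Γ` and `S` the kernel of `f : G → ℤ`, and write
`G_W` for the subgroup generated by a set `W` of vertices. For `v ∈ W`, let `E ⊆ W` be the set of
neighbours of `v` and let `B = W \ {v}`. The sequence of `S`-modules
`0 → k[G ⧸ G_E] → k[G ⧸ G_B] → k[G ⧸ G_W] → 0`, with first map `g ↦ gv - g`, is exact; for
injectivity one counts the edges of the Cayley graph labelled by `v`, which is consistent because
all relations of `G` are squares. Hence finiteness of the homology of `S` passes from `E` and `B` to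
`W`. If `f v ≠ 0`, then `S` acts freely on `G ⧸ ⟨v⟩` with finitely many orbits, so `W = {v}` has
finite homology. When `Γ` can be dismantled to such vertices by deleting vertices whose links can be
dismantled as well, we reach the trivial module `k[G ⧸ G]`.

The group `P₄ × P₄` belongs to the join of two paths. A join is dismantled along with either of its
factors, and the second path can be dismantled to its two inner vertices, on which `f` is nonzero.
-/

universe u

section BarComplex

open CategoryTheory

/-- Homology of a complex of modules as the quotient of cycles by boundaries. -/
noncomputable def moduleCatHomologyEquiv {R : Type*} [Ring R] {ι : Type*} {c : ComplexShape ι}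
    (K : HomologicalComplex (ModuleCat R) c) (i j k : ι) (hi : c.prev j = i) (hk : c.next j = k) :
    K.homology j ≃ₗ[R] LinearMap.ker (K.d j k).hom ⧸
      (LinearMap.range (K.d i j).hom).comap (LinearMap.ker (K.d j k).hom).subtype :=
  (K.homologyIsoSc' i j k hi hk ≪≫ (K.sc' i j k).moduleCatHomologyIso).toLinearEquiv ≪≫ₗ
    Submodule.quotEquivOfEq _ _ (LinearMap.range_codRestrict _ _ _)

variable {G : Type} [Group G]

lemma barFace_zero {n : ℕ} (g : Fin (n + 1) → G) : barFace G 0 g = fun j => g j.succ := by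
  funext j
  simp [barFace]

lemma barFace_succ {n : ℕ} (i : Fin (n + 1)) (g : Fin (n + 1) → G) :
    barFace G i.succ g = Fin.contractNth i (· * ·) g := by
  funext j
  simp [barFace, Fin.contractNth]

lemma barD_eq_inhomogeneousChains_d (n : ℕ) :
    barD G n = (groupHomology.inhomogeneousChains.d (Rep.trivial ℤ G ℤ) n).hom := by
  refine Finsupp.lhom_ext fun g z => ?_
  refine Eq.trans ?_
    (groupHomology.inhomogeneousChains.d_single (A := Rep.trivial ℤ G ℤ) n g z).symm
  rw [barD, Finsupp.lift_apply, Finsupp.sum_single_index (by simp), Fin.sum_univ_succ,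
    smul_add, Finset.smul_sum, barFace_zero]
  congr 1
  · simp
  · refine Finset.sum_congr rfl fun j _ => ?_
    rw [barFace_succ, smul_comm, Finsupp.smul_single_one, Fin.val_succ]

lemma inhomogeneousChains_d_hom (n : ℕ) :
    ((groupHomology.inhomogeneousChains (Rep.trivial ℤ G ℤ)).d (n + 1) n).hom = barD G n := by
  rw [groupHomology.inhomogeneousChains.d_def, barD_eq_inhomogeneousChains_d]

lemma barCycles_eq_ker (n : ℕ) :
    barCycles G n = LinearMap.ker ((groupHomology.inhomogeneousChains (Rep.trivial ℤ G ℤ)).d n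
      ((ComplexShape.down ℕ).next n)).hom := by
  cases n with
  | zero =>
    rw [HomologicalComplex.shape _ _ _ (by simp)]
    exact LinearMap.ker_zero.symm
  | succ n =>
    rw [ChainComplex.next_nat_succ, inhomogeneousChains_d_hom]
    rfl

/-- The homology of the bar complex is Mathlib's group homology with trivial coefficients. -/
noncomputable def groupHomologyZAddEquiv (G : Type) [Group G] (n : ℕ) :
    groupHomologyZ G n ≃+ groupHomology (Rep.trivial ℤ G ℤ) n :=
  (Submodule.Quotient.equiv _ _ (LinearEquiv.ofEq _ _ (barCycles_eq_ker n)) (by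
    rw [inhomogeneousChains_d_hom]
    ext x
    simp)
   ≪≫ₗ (moduleCatHomologyEquiv (groupHomology.inhomogeneousChains (Rep.trivial ℤ G ℤ))
    (n + 1) n _ (ChainComplex.prev _ _) rfl).symm).toAddEquiv

end BarComplex

section FiniteHomology

open CategoryTheory

variable {k S : Type u} [CommRing k] [Group S]

/-- A representation has finite homology if all its homology groups are finitely generated
modules. -/
def HasFiniteHomology (A : Rep.{u} k S) : Prop :=
  ∀ n, Module.Finite k (groupHomology A n)

namespace HasFiniteHomology

lemma of_retract {A B : Rep.{u} k S} (r : Retract A B) (hB : HasFiniteHomology B) :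
    HasFiniteHomology A := by
  intro n
  have := hB n
  let F := groupHomology.functor k S n
  let p : groupHomology B n →ₗ[k] groupHomology A n := (F.map r.r).hom
  exact Module.Finite.of_surjective p
    fun x => ⟨F.map r.i x, ConcreteCategory.congr_hom (r.map F).retract x⟩

lemma of_shortExact [IsNoetherianRing k] {X : ShortComplex (Rep.{u} k S)}
    (hX : X.ShortExact) (h₁ : HasFiniteHomology X.X₁) (h₂ : HasFiniteHomology X.X₂) :
    HasFiniteHomology X.X₃ := by
  intro n
  have := h₂ n
  cases n with
  | zero =>
    have := hX.epi_g
    exact Module.Finite.of_surjective (M := groupHomology X.X₂ 0) _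
      ((ModuleCat.epi_iff_surjective _).1
        (inferInstance : Epi (groupHomology.map (MonoidHom.id S) X.g 0)))
  | succ n =>
    have := h₁ n
    have hex := groupHomology.mapShortComplex₃_exact hX (i := n + 1) (j := n) rfl
    let f : groupHomology X.X₂ (n + 1) →ₗ[k] groupHomology X.X₃ (n + 1) :=
      (groupHomology.mapShortComplex₃ hX (i := n + 1) (j := n) rfl).f.hom
    let δ : groupHomology X.X₃ (n + 1) →ₗ[k] groupHomology X.X₁ n :=
      (groupHomology.mapShortComplex₃ hX (i := n + 1) (j := n) rfl).g.hom
    have : IsNoetherian k (groupHomology X.X₃ (n + 1)) :=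
      isNoetherian_of_range_eq_ker f δ hex.moduleCat_range_eq_ker
    infer_instance

lemma of_exact [IsNoetherianRing k] {V₁ V₂ V₃ : Type u} [AddCommGroup V₁]
    [AddCommGroup V₂] [AddCommGroup V₃] [Module k V₁] [Module k V₂] [Module k V₃]
    {ρ₁ : Representation k S V₁} {ρ₂ : Representation k S V₂} {ρ₃ : Representation k S V₃}
    {α : ρ₁.IntertwiningMap ρ₂} {β : ρ₂.IntertwiningMap ρ₃}
    (hα : Function.Injective α) (hαβ : Function.Exact α β) (hβ : Function.Surjective β)
    (h₁ : HasFiniteHomology (Rep.of ρ₁)) (h₂ : HasFiniteHomology (Rep.of ρ₂)) :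
    HasFiniteHomology (Rep.of ρ₃) := by
  have hzero : Rep.ofHom α ≫ Rep.ofHom β = 0 := by
    ext x
    exact hαβ.apply_apply_eq_zero x
  let X : ShortComplex (Rep.{u} k S) := ShortComplex.mk (Rep.ofHom α) (Rep.ofHom β) hzero
  have hX : (X.map (forget₂ (Rep.{u} k S) (ModuleCat k))).Exact :=
    (ShortComplex.moduleCat_exact_iff _).2 fun x hx => (hαβ x).1 hx
  exact of_shortExact (X := X)
    { exact := (ShortComplex.exact_map_iff_of_faithful _ _).1 hX
      mono_f := (Rep.mono_iff_injective _).2 hα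
      epi_g := (Rep.epi_iff_surjective _).2 hβ } h₁ h₂

lemma of_subsingleton [Subsingleton S] (A : Rep.{u} k S) [Module.Finite k A] :
    HasFiniteHomology A
  | 0 => Module.Finite.of_surjective (M := A) (groupHomology.H0π A).hom
      ((ModuleCat.epi_iff_surjective _).1 inferInstance)
  | n + 1 =>
    have := ModuleCat.subsingleton_of_isZero (isZero_groupHomology_succ_of_subsingleton A n)
    inferInstanceAs (Module.Finite k (groupHomology A (n + 1)))

/-- Shapiro's lemma. -/
lemma ind {S₀ : Subgroup S} {A : Rep.{u} k S₀} (hA : HasFiniteHomology A) :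
    HasFiniteHomology (Rep.ind S₀.subtype A) := by
  classical
  exact fun n =>
    have := hA n
    Module.Finite.equiv (groupHomology.indIso S₀ A n).symm.toLinearEquiv

end HasFiniteHomology

end FiniteHomology

section PermutationRepresentations

open CategoryTheory Representation MulAction

variable {k S X : Type u} [CommRing k] [Group S] [MulAction S X]

/-- The extension of an equivariant map `X → V` to the permutation representation on `k[X]`. -/
noncomputable def ofMulActionLift {V : Type u} [AddCommGroup V] [Module k V]
    {ρ : Representation k S V} (φ : X → V) (hφ : ∀ (g : S) x, φ (g • x) = ρ g (φ x)) :
    (ofMulAction k S X).IntertwiningMap ρ where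
  toLinearMap := (MonoidAlgebra.basis X k).constr k φ
  isIntertwining' g := (MonoidAlgebra.basis X k).ext fun x => by
    have hsingle (y : X) : (MonoidAlgebra.basis X k).constr k φ (.single y 1) = φ y :=
      (MonoidAlgebra.basis X k).constr_basis k φ y
    simp [hsingle, hφ]

@[simp]
lemma ofMulActionLift_single {V : Type u} [AddCommGroup V] [Module k V]
    {ρ : Representation k S V} (φ : X → V) (hφ : ∀ (g : S) x, φ (g • x) = ρ g (φ x)) (x : X) :
    ofMulActionLift φ hφ (.single x (1 : k)) = φ x :=
  (MonoidAlgebra.basis X k).constr_basis k φ x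

lemma indResHomEquiv_symm_mk {H : Type u} [Group H] (φ : S →* H) {A : Rep.{u} k S}
    {B : Rep.{u} k H} (q : A ⟶ Rep.res φ B) (h : H) (a : A) :
    ((Rep.indResHomEquiv φ A B).symm q).hom (IndV.mk φ A.ρ h a) = B.ρ h⁻¹ (q.hom a) := by
  simp

lemma exists_equivariant_of_isCancelSMul (S X : Type*) [Group S] [MulAction S X]
    [IsCancelSMul S X] :
    ∃ (γ : X → S) (ω : X → orbitRel.Quotient S X), (∀ x, γ x • (ω x).out = x) ∧
      (∀ (g : S) x, γ (g • x) = g * γ x) ∧ ∀ (g : S) x, ω (g • x) = ω x := by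
  let ω : X → orbitRel.Quotient S X := Quotient.mk (orbitRel S X)
  have hω (g : S) (x : X) : ω (g • x) = ω x := Quotient.sound ⟨g, rfl⟩
  have horbit (x : X) : ∃ g : S, g • (ω x).out = x :=
    (Quotient.exact (s := orbitRel S X) (Quotient.out_eq (ω x)).symm)
  choose γ hγ using horbit
  refine ⟨γ, ω, hγ, fun g x => IsCancelSMul.right_cancel _ _ (ω x).out ?_, hω⟩
  rw [mul_smul, hγ x, ← hω g x, hγ]

-- A free permutation representation is a retract of one induced from the trivial subgroup.
lemma hasFiniteHomology_ofMulAction_of_isCancelSMul [IsCancelSMul S X]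
    [Finite (orbitRel.Quotient S X)] : HasFiniteHomology (Rep.ofMulAction k S X) := by
  obtain ⟨γ, ω, hγω, hγ, hω⟩ := exists_equivariant_of_isCancelSMul S X
  let φ : (⊥ : Subgroup S) →* S := (⊥ : Subgroup S).subtype
  let T : Rep.{u} k (⊥ : Subgroup S) := Rep.trivial k _ (orbitRel.Quotient S X →₀ k)
  have : Module.Finite k T := inferInstanceAs (Module.Finite k (orbitRel.Quotient S X →₀ k))
  let ψ (x : X) : Rep.ind φ T := IndV.mk φ T.ρ (γ x)⁻¹ (Finsupp.single (ω x) 1)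
  have hψ (g : S) (x : X) : ψ (g • x) = (Rep.ind φ T).ρ g (ψ x) := by
    simp only [ψ]
    rw [hγ, hω, ind_mk, mul_inv_rev]
  let i : Rep.ofMulAction k S X ⟶ Rep.ind φ T := Rep.ofHom (ofMulActionLift ψ hψ)
  let q : T ⟶ Rep.res φ (Rep.ofMulAction k S X) := Rep.ofHom
    { toLinearMap := Finsupp.lift _ k _ fun o => .single o.out 1
      isIntertwining' g := by
        have hg : φ g = 1 := g.2
        ext
        simp [hg] }
  have hq (o : orbitRel.Quotient S X) :
      q.hom (Finsupp.single o 1) = (MonoidAlgebra.single o.out 1 : MonoidAlgebra k X) :=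
    (Finsupp.lift_apply ..).trans (by simp)
  let p : Rep.ind φ T ⟶ Rep.ofMulAction k S X := (Rep.indResHomEquiv φ T _).symm q
  refine (HasFiniteHomology.of_subsingleton T).ind.of_retract ⟨i, p, ?_⟩
  refine Rep.hom_ext (IntertwiningMap.toLinearMap_injective _ _
    ((MonoidAlgebra.basis X k).ext fun x => ?_))
  calc p.hom (i.hom (.single x 1))
      = p.hom (ψ x) := congrArg p.hom (ofMulActionLift_single ψ hψ x)
    _ = ofMulAction k S X (γ x) (q.hom (Finsupp.single (ω x) 1)) :=
      (indResHomEquiv_symm_mk φ q _ _).trans (by rw [inv_inv])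
    _ = ofMulAction k S X (γ x) (.single (ω x).out 1) := by rw [hq]
    _ = .single x 1 := by rw [ofMulAction_single, hγω]

lemma isCancelSMul_ker_quotient {G A : Type*} [Group G] [Group A] {f : G →* A} {K : Subgroup G}
    (hK : Disjoint f.ker K) : IsCancelSMul f.ker (G ⧸ K) where
  right_cancel' := by
    rintro ⟨a, ha⟩ ⟨b, hb⟩ ⟨g⟩ h
    have hmem : g⁻¹ * (a⁻¹ * b) * g ∈ K := by
      simpa [mul_assoc] using (QuotientGroup.eq (a := a * g) (b := b * g)).1 h
    have hker : g⁻¹ * (a⁻¹ * b) * g ∈ f.ker := by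
      simpa using f.normal_ker.conj_mem _ (mul_mem (inv_mem ha) hb) g⁻¹
    have hone : g⁻¹ * (a⁻¹ * b) * g = 1 := Subgroup.disjoint_def.1 hK hker hmem
    have hba : b = a := by simpa [mul_assoc, inv_mul_eq_iff_eq_mul] using hone
    exact Subtype.ext hba.symm

lemma finite_orbits_ker_quotient {G A : Type*} [Group G] [Group A] (f : G →* A) (K : Subgroup G)
    [(K.map f).FiniteIndex] : Finite (orbitRel.Quotient f.ker (G ⧸ K)) := by
  have horbit (g h : G) (hgh : (f g : A ⧸ K.map f) = f h) :
      ∃ n : f.ker, n • (h : G ⧸ K) = (g : G ⧸ K) := by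
    obtain ⟨c, hc, hfc⟩ := QuotientGroup.eq.1 hgh
    refine ⟨⟨g * c * h⁻¹, by simp [MonoidHom.mem_ker, hfc]⟩, QuotientGroup.eq.2 ?_⟩
    simpa using hc
  refine Finite.of_injective (fun o => (f o.out.out : A ⧸ K.map f)) fun o₁ o₂ h => ?_
  have hout := horbit _ _ h
  rw [QuotientGroup.out_eq', QuotientGroup.out_eq'] at hout
  rw [← Quotient.out_eq o₁, ← Quotient.out_eq o₂]
  exact Quotient.sound hout

lemma hasFiniteHomology_ker_quotient {G : Type u} {A : Type*} [Group G] [Group A] {f : G →* A}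
    {K : Subgroup G} (hK : Disjoint f.ker K) [(K.map f).FiniteIndex] :
    HasFiniteHomology (Rep.ofMulAction k f.ker (G ⧸ K)) :=
  have := isCancelSMul_ker_quotient hK
  have := finite_orbits_ker_quotient f K
  hasFiniteHomology_ofMulAction_of_isCancelSMul

lemma hasFiniteHomology_ker_quotient_zpowers {G : Type u} [Group G] {f : G →* Multiplicative ℤ}
    {t : G} (ht : f t ≠ 1) :
    HasFiniteHomology (Rep.ofMulAction k f.ker (G ⧸ Subgroup.zpowers t)) := by
  have hdisj : Disjoint f.ker (Subgroup.zpowers t) := by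
    rw [Subgroup.disjoint_def]
    rintro _ hker ⟨n, rfl⟩
    have hn : f t ^ n = 1 := by simpa using hker
    obtain rfl := (IsMulTorsionFree.zpow_eq_one_iff.1 hn).resolve_left ht
    exact zpow_zero t
  have hindex : ((Subgroup.zpowers t).map f).FiniteIndex := by
    rw [MonoidHom.map_zpowers]
    have h : (Subgroup.zpowers (f t)).index = (f t).toAdd.natAbs := Int.index_zmultiples _
    exact ⟨by rwa [h, Int.natAbs_ne_zero]⟩
  exact hasFiniteHomology_ker_quotient hdisj

end PermutationRepresentations

section ArtinGroups

/-- The group `G` is the right-angled Artin group of the graph `Γ`, with the generator of a vertex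
`v` being `ι v`. The presentation is encoded by its universal property among the groups in the
universe of `G`. -/
structure IsRightAngledArtinGroup {V : Type*} {G : Type u} [Group G] (Γ : SimpleGraph V)
    (ι : V → G) : Prop where
  closure_range : Subgroup.closure (Set.range ι) = ⊤
  commute : ∀ v w, Γ.Adj v w → Commute (ι v) (ι w)
  exists_lift : ∀ (H : Type u) [Group H] (φ : V → H),
    (∀ v w, Γ.Adj v w → Commute (φ v) (φ w)) → ∃ F : G →* H, ∀ v, F (ι v) = φ v

/-- The subgroup generated by a set of vertices. -/
def vertexSubgroup {V G : Type*} [Group G] (ι : V → G) (W : Set V) : Subgroup G :=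
  Subgroup.closure (ι '' W)

section VertexSubgroup

variable {V G : Type*} [Group G] (ι : V → G)

lemma mem_vertexSubgroup {W : Set V} {v : V} (hv : v ∈ W) : ι v ∈ vertexSubgroup ι W :=
  Subgroup.subset_closure ⟨v, hv, rfl⟩

lemma vertexSubgroup_mono {W W' : Set V} (h : W ⊆ W') :
    vertexSubgroup ι W ≤ vertexSubgroup ι W' :=
  Subgroup.closure_mono (Set.image_mono h)

lemma vertexSubgroup_singleton (v : V) : vertexSubgroup ι {v} = Subgroup.zpowers (ι v) := by
  rw [vertexSubgroup, Set.image_singleton, Subgroup.zpowers_eq_closure]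

end VertexSubgroup

/-- The permutation of `G × M` moving the first coordinate along right multiplication by `t` and
accumulating the cost `c` of the edge from `g` to `g * t` in the second. -/
@[simps]
def edgePerm {G M : Type*} [Group G] [AddGroup M] (t : G) (c : G → M) : Equiv.Perm (G × M) where
  toFun p := (p.1 * t, p.2 + c p.1)
  invFun p := (p.1 * t⁻¹, p.2 - c (p.1 * t⁻¹))
  left_inv p := by simp
  right_inv p := by simp

variable {V : Type*} {G M : Type u} [Group G] {Γ : SimpleGraph V} {ι : V → G}

namespace IsRightAngledArtinGroup

lemma exists_potential_hom [AddCommGroup M] (hG : IsRightAngledArtinGroup Γ ι) (W : Set V)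
    (c : V → G → M)
    (hc : ∀ v ∈ W, ∀ w ∈ W, Γ.Adj v w → ∀ g, c v g + c w (g * ι v) = c w g + c v (g * ι w)) :
    ∃ F : G →* Equiv.Perm (G × M), ∀ v ∈ W, F (ι v) = (edgePerm (ι v) (c v))⁻¹ := by
  classical
  obtain ⟨F, hF⟩ := hG.exists_lift (Equiv.Perm (G × M))
    (fun v => if v ∈ W then (edgePerm (ι v) (c v))⁻¹ else 1) (by
      intro v w hvw
      by_cases hv : v ∈ W
      · by_cases hw : w ∈ W
        · simp only [hv, hw, if_true]
          refine Commute.inv_inv (Equiv.ext fun p => Prod.ext ?_ ?_)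
          · simp [mul_assoc, (hG.commute v w hvw).eq]
          · have := hc v hv w hw hvw p.1
            simp [add_assoc, this]
        · simp [hw]
      · simp [hv])
  exact ⟨F, fun v hv => by rw [hF, if_pos hv]⟩

/-- Closed 1-cochains on the Cayley complex of a right-angled Artin group are exact, the relations
being the squares of commuting generators. -/
lemma exists_potential [AddCommGroup M] (hG : IsRightAngledArtinGroup Γ ι) (W : Set V)
    (c : V → G → M)
    (hc : ∀ v ∈ W, ∀ w ∈ W, Γ.Adj v w → ∀ g, c v g + c w (g * ι v) = c w g + c v (g * ι w)) :
    ∃ K : G → M, ∀ v ∈ W, ∀ g, K (g * ι v) = K g + c v g := by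
  obtain ⟨F, hF⟩ := hG.exists_potential_hom W c hc
  have hfst : ∀ h ∈ vertexSubgroup ι W, ∀ p, (F h p).1 = p.1 * h⁻¹ := by
    intro h hh
    induction hh using Subgroup.closure_induction with
    | mem h hh =>
      obtain ⟨v, hv, rfl⟩ := hh
      simp [hF v hv, Equiv.Perm.inv_def]
    | one => simp
    | mul g h _ _ ihg ihh => simp [ihg, ihh, mul_assoc]
    | inv h _ ih => exact fun p => by simpa using (mul_inv_eq_iff_eq_mul.1 (ih (F h⁻¹ p)).symm)
  let s (g : G) : G := (g : G ⧸ vertexSubgroup ι W).out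
  have hs (g : G) : g⁻¹ * s g ∈ vertexSubgroup ι W :=
    QuotientGroup.eq.1 (QuotientGroup.out_eq' _).symm
  refine ⟨fun g => (F (g⁻¹ * s g) (s g, 0)).2, fun v hv g => ?_⟩
  have hsv : s (g * ι v) = s g := by
    simp only [s]
    rw [QuotientGroup.mk_mul_of_mem g (mem_vertexSubgroup ι hv)]
  have hpos : (F (g⁻¹ * s g) (s g, 0)).1 = g := by
    rw [hfst _ (hs g), mul_inv_rev, inv_inv, mul_inv_cancel_left]
  calc (F ((g * ι v)⁻¹ * s (g * ι v)) (s (g * ι v), 0)).2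
      = (edgePerm (ι v) (c v) (F (g⁻¹ * s g) (s g, 0))).2 := by
        rw [hsv, mul_inv_rev, mul_assoc, map_mul, map_inv, hF v hv, inv_inv, Equiv.Perm.mul_apply]
    _ = (F (g⁻¹ * s g) (s g, 0)).2 + c v g := by rw [edgePerm_apply, hpos]

end IsRightAngledArtinGroup

end ArtinGroups

section CosetDifference

open Representation

variable (k : Type u) {G : Type u} [CommRing k] [Group G] (S : Subgroup G) {B E : Subgroup G}

/-- The homomorphism `k[G ⧸ E] → k[G ⧸ B]` sending `gE` to `gtB - gB`, for an element `t`
centralizing `E ≤ B`, regarded as a map of representations of a subgroup `S` of `G`. -/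
noncomputable def cosetDifference (t : G) (hEB : E ≤ B) (ht : ∀ e ∈ E, Commute t e) :
    (ofMulAction k S (G ⧸ E)).IntertwiningMap (ofMulAction k S (G ⧸ B)) :=
  ofMulActionLift
    (Quotient.lift (fun g : G => MonoidAlgebra.single ((g * t : G) : G ⧸ B) (1 : k) -
        MonoidAlgebra.single (g : G ⧸ B) 1) fun g h hgh => by
      have he := QuotientGroup.leftRel_apply.1 hgh
      have hgt : ((g * t : G) : G ⧸ B) = (h * t : G) := QuotientGroup.eq.2 <| by
        have hcomm : (g * t)⁻¹ * (h * t) = g⁻¹ * h := by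
          rw [mul_inv_rev, mul_assoc, ← mul_assoc g⁻¹, ← (ht _ he).eq, inv_mul_cancel_left]
        exact hcomm ▸ hEB he
      simp only [hgt, QuotientGroup.eq.2 (hEB he)])
    (by
      rintro ⟨g, _⟩ x
      induction x using QuotientGroup.induction_on with | H h => ?_
      refine Eq.symm ((map_sub _ _ _).trans ?_)
      rw [ofMulAction_single, ofMulAction_single]
      exact congrArg (MonoidAlgebra.single · 1 - _)
        (congrArg QuotientGroup.mk (mul_assoc g h t).symm))

/-- The projection `k[G ⧸ B] → k[G ⧸ C]` as a map of representations of a subgroup `S` of `G`. -/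
noncomputable def cosetProjection {C : Subgroup G} (hBC : B ≤ C) :
    (ofMulAction k S (G ⧸ B)).IntertwiningMap (ofMulAction k S (G ⧸ C)) :=
  ofMulActionLift (fun x => MonoidAlgebra.single (Subgroup.quotientMapOfLE hBC x) (1 : k)) (by
    rintro g ⟨h⟩
    rw [ofMulAction_single]
    rfl)

variable {k S} {t : G}

lemma cosetDifference_single (hEB : E ≤ B) (ht : ∀ e ∈ E, Commute t e) (g : G) :
    cosetDifference k S t hEB ht (.single (g : G ⧸ E) 1) =
      MonoidAlgebra.single ((g * t : G) : G ⧸ B) 1 - MonoidAlgebra.single (g : G ⧸ B) 1 :=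
  ofMulActionLift_single _ _ _

lemma cosetProjection_single {C : Subgroup G} (hBC : B ≤ C) (g : G) :
    cosetProjection k S hBC (.single (g : G ⧸ B) 1) = .single (g : G ⧸ C) 1 :=
  ofMulActionLift_single _ _ _

lemma cosetProjection_surjective {C : Subgroup G} (hBC : B ≤ C) :
    Function.Surjective (cosetProjection k S hBC) := by
  suffices h : (cosetProjection k S hBC).toLinearMap.range = ⊤ from LinearMap.range_eq_top.1 h
  rw [eq_top_iff, ← (MonoidAlgebra.basis (G ⧸ C) k).span_eq, Submodule.span_le]
  rintro _ ⟨⟨g⟩, rfl⟩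
  exact ⟨.single (g : G ⧸ B) 1, cosetProjection_single hBC g⟩

lemma single_sub_single_mem_range_cosetDifference (hEB : E ≤ B) (ht : ∀ e ∈ E, Commute t e)
    {c : G} (hc : c ∈ B ⊔ Subgroup.zpowers t) (g : G) :
    MonoidAlgebra.single ((g * c : G) : G ⧸ B) (1 : k) - MonoidAlgebra.single (g : G ⧸ B) 1 ∈
      (cosetDifference k S t hEB ht).toLinearMap.range := by
  rw [← B.closure_eq, Subgroup.zpowers_eq_closure, ← Subgroup.closure_union] at hc
  induction hc using Subgroup.closure_induction generalizing g with
  | mem c hc =>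
    obtain hc | rfl := hc
    · rw [QuotientGroup.mk_mul_of_mem g hc, sub_self]
      exact zero_mem _
    · exact ⟨_, cosetDifference_single hEB ht g⟩
  | one => simp
  | mul c d _ _ ihc ihd => simpa [mul_assoc] using add_mem (ihd (g * c)) (ihc g)
  | inv c _ ih => simpa using neg_mem (ih (g * c⁻¹))

lemma cosetProjection_cosetDifference (hEB : E ≤ B) (ht : ∀ e ∈ E, Commute t e)
    (y : MonoidAlgebra k (G ⧸ E)) :
    cosetProjection k S (le_sup_left : B ≤ B ⊔ Subgroup.zpowers t)
      (cosetDifference k S t hEB ht y) = 0 := by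
  let α := (cosetDifference k S t hEB ht).toLinearMap
  let β := (cosetProjection k S (le_sup_left : B ≤ B ⊔ Subgroup.zpowers t)).toLinearMap
  have hβα : β ∘ₗ α = 0 := (MonoidAlgebra.basis (G ⧸ E) k).ext fun x => by
    induction x using QuotientGroup.induction_on with | H g => ?_
    have hgt : ((g * t : G) : G ⧸ B ⊔ Subgroup.zpowers t) = g :=
      QuotientGroup.mk_mul_of_mem g (Subgroup.mem_sup_right (Subgroup.mem_zpowers t))
    calc β (α (.single (g : G ⧸ E) 1))
        = β (.single ((g * t : G) : G ⧸ B) 1) - β (.single (g : G ⧸ B) 1) :=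
          (congrArg β (cosetDifference_single hEB ht g)).trans (map_sub β _ _)
      _ = 0 := sub_eq_zero.2 <| (cosetProjection_single _ _).trans <| by
          rw [hgt]
          exact (cosetProjection_single _ _).symm
  exact LinearMap.congr_fun hβα y

lemma exact_cosetDifference_cosetProjection (hEB : E ≤ B) (ht : ∀ e ∈ E, Commute t e) :
    Function.Exact (cosetDifference k S t hEB ht)
      (cosetProjection k S (le_sup_left : B ≤ B ⊔ Subgroup.zpowers t)) := by
  let α := (cosetDifference k S t hEB ht).toLinearMap
  let β := (cosetProjection k S (le_sup_left : B ≤ B ⊔ Subgroup.zpowers t)).toLinearMap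
  let σ := (MonoidAlgebra.basis (G ⧸ B ⊔ Subgroup.zpowers t) k).constr k
    fun x => MonoidAlgebra.single (x.out : G ⧸ B) (1 : k)
  have hσβ : α.range.mkQ ∘ₗ σ ∘ₗ β = α.range.mkQ := (MonoidAlgebra.basis (G ⧸ B) k).ext fun x => by
    induction x using QuotientGroup.induction_on with | H g => ?_
    obtain ⟨⟨c, hc⟩, hgc⟩ := QuotientGroup.mk_out_eq_mul (B ⊔ Subgroup.zpowers t) g
    have hσ : σ (β (.single (g : G ⧸ B) 1)) = .single ((g * c : G) : G ⧸ B) 1 := by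
      rw [← hgc]
      exact (congrArg σ (cosetProjection_single _ g)).trans
        ((MonoidAlgebra.basis _ k).constr_basis k _ _)
    exact (congrArg α.range.mkQ hσ).trans
      ((Submodule.Quotient.eq _).2 (single_sub_single_mem_range_cosetDifference hEB ht hc g))
  refine fun y => ⟨fun hy => ?_, ?_⟩
  · have h := LinearMap.congr_fun hσβ y
    have hβy : β y = 0 := hy
    rw [LinearMap.comp_apply, LinearMap.comp_apply, hβy, map_zero, map_zero] at h
    exact (Submodule.Quotient.mk_eq_zero _).1 h.symm
  · rintro ⟨x, rfl⟩
    exact cosetProjection_cosetDifference hEB ht x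

lemma cosetDifference_injective (hEB : E ≤ B) (ht : ∀ e ∈ E, Commute t e)
    {K : G → MonoidAlgebra k (G ⧸ E)} (hB : ∀ b ∈ B, ∀ g, K (g * b) = K g)
    (hK : ∀ g, K (g * t) = K g + .single (g : G ⧸ E) 1) :
    Function.Injective (cosetDifference k S t hEB ht) := by
  let α := (cosetDifference k S t hEB ht).toLinearMap
  let κ : G ⧸ B → MonoidAlgebra k (G ⧸ E) := Quotient.lift K fun g h hgh => by
    simpa using (hB _ (QuotientGroup.leftRel_apply.1 hgh) g).symm
  let r := (MonoidAlgebra.basis (G ⧸ B) k).constr k κ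
  have hr (g : G) : r (.single (g : G ⧸ B) 1) = K g :=
    (MonoidAlgebra.basis _ k).constr_basis k κ g
  have hrα : r ∘ₗ α = LinearMap.id := (MonoidAlgebra.basis (G ⧸ E) k).ext fun x => by
    induction x using QuotientGroup.induction_on with | H g => ?_
    calc r (α (.single (g : G ⧸ E) 1))
        = r (.single ((g * t : G) : G ⧸ B) 1) - r (.single (g : G ⧸ B) 1) :=
          (congrArg r (cosetDifference_single hEB ht g)).trans (map_sub r _ _)
      _ = .single (g : G ⧸ E) 1 := by rw [hr, hr, hK, add_sub_cancel_left]
  exact Function.LeftInverse.injective (g := r) (LinearMap.congr_fun hrα)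

end CosetDifference

section Vertices

open SimpleGraph

variable {V : Type*} {k G : Type u} [CommRing k] [Group G] {Γ : SimpleGraph V} {ι : V → G}

lemma vertexSubgroup_diff_singleton_sup {W : Set V} {v : V} (hv : v ∈ W) :
    vertexSubgroup ι (W \ {v}) ⊔ Subgroup.zpowers (ι v) = vertexSubgroup ι W := by
  rw [← vertexSubgroup_singleton, vertexSubgroup, vertexSubgroup, vertexSubgroup,
    ← Subgroup.closure_union, ← Set.image_union, Set.sdiff_union_of_subset
      (Set.singleton_subset_iff.2 hv)]

lemma inter_neighborSet_subset_diff_singleton (Γ : SimpleGraph V) (W : Set V) (v : V) :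
    W ∩ Γ.neighborSet v ⊆ W \ {v} :=
  fun _ hw => ⟨hw.1, (Γ.ne_of_adj hw.2).symm⟩

namespace IsRightAngledArtinGroup

lemma commute_of_mem_vertexSubgroup_neighborSet (hG : IsRightAngledArtinGroup Γ ι) {W : Set V}
    {v : V} {e : G} (he : e ∈ vertexSubgroup ι (W ∩ Γ.neighborSet v)) : Commute (ι v) e := by
  have hle : vertexSubgroup ι (W ∩ Γ.neighborSet v) ≤ Subgroup.centralizer {ι v} := by
    rw [vertexSubgroup, Subgroup.closure_le]
    rintro _ ⟨w, hw, rfl⟩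
    exact Subgroup.mem_centralizer_singleton_iff.2 (hG.commute v w hw.2).symm.eq
  exact (Subgroup.mem_centralizer_singleton_iff.1 (hle he)).symm

/-- The potential counting the edges of the Cayley graph labelled by `v`, according to their coset
modulo the link of `v`. -/
lemma exists_edge_potential (hG : IsRightAngledArtinGroup Γ ι) {W : Set V} {v : V} (hv : v ∈ W) :
    ∃ K : G → MonoidAlgebra k (G ⧸ vertexSubgroup ι (W ∩ Γ.neighborSet v)),
      (∀ b ∈ vertexSubgroup ι (W \ {v}), ∀ g, K (g * b) = K g) ∧
      ∀ g : G, K (g * ι v) = K g + .single (g : G ⧸ _) 1 := by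
  classical
  let E := vertexSubgroup ι (W ∩ Γ.neighborSet v)
  let c (u : V) (g : G) : MonoidAlgebra k (G ⧸ E) := if u = v then .single (g : G ⧸ E) 1 else 0
  have hE {u : V} (hu : u ∈ W) (hvu : Γ.Adj v u) (g : G) : ((g * ι u : G) : G ⧸ E) = g :=
    QuotientGroup.mk_mul_of_mem g (mem_vertexSubgroup ι ⟨hu, hvu⟩)
  obtain ⟨K, hK⟩ := hG.exists_potential W c fun u hu w hw huw g => by
    by_cases huv : u = v
    · subst huv
      simp [c, hE hw huw, huw.ne']
    · by_cases hwv : w = v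
      · subst hwv
        simp [c, hE hu huw.symm, huv]
      · simp [c, huv, hwv]
  refine ⟨K, fun b hb => ?_, fun g => by simpa [c] using hK v hv g⟩
  induction hb using Subgroup.closure_induction with
  | mem b hb =>
    obtain ⟨u, hu, rfl⟩ := hb
    have huv : u ≠ v := hu.2
    exact fun g => by simpa [c, huv] using hK u hu.1 g
  | one => simp
  | mul a b _ _ iha ihb => exact fun g => by rw [← mul_assoc, ihb, iha]
  | inv b _ ih => exact fun g => by simpa using (ih (g * b⁻¹)).symm

lemma hasFiniteHomology_of_vertex [IsNoetherianRing k] (hG : IsRightAngledArtinGroup Γ ι)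
    {S : Subgroup G} {W : Set V} {v : V} (hv : v ∈ W)
    (hlink : HasFiniteHomology
      (Rep.ofMulAction k S (G ⧸ vertexSubgroup ι (W ∩ Γ.neighborSet v))))
    (hdel : HasFiniteHomology (Rep.ofMulAction k S (G ⧸ vertexSubgroup ι (W \ {v})))) :
    HasFiniteHomology (Rep.ofMulAction k S (G ⧸ vertexSubgroup ι W)) := by
  obtain ⟨K, hKB, hKt⟩ := hG.exists_edge_potential (k := k) hv
  have hEB := vertexSubgroup_mono ι (inter_neighborSet_subset_diff_singleton Γ W v)
  rw [← vertexSubgroup_diff_singleton_sup hv]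
  exact .of_exact
    (cosetDifference_injective hEB (fun _ => hG.commute_of_mem_vertexSubgroup_neighborSet) hKB hKt)
    (exact_cosetDifference_cosetProjection hEB _) (cosetProjection_surjective le_sup_left)
    hlink hdel

end IsRightAngledArtinGroup

end Vertices

section Nonevasive

open SimpleGraph

variable {V : Type*}

/-- The flag complex of the subgraph of `Γ` induced on a vertex set is nonevasive: it can be reduced
to a point of `L` by deleting vertices whose links are nonevasive in the same sense. -/
inductive IsNonevasive (Γ : SimpleGraph V) (L : Set V) : Set V → Prop
  | singleton {v : V} (hv : v ∈ L) : IsNonevasive Γ L {v}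
  | of_vertex {W : Set V} {v : V} (hv : v ∈ W) (hlink : IsNonevasive Γ L (W ∩ Γ.neighborSet v))
      (hdel : IsNonevasive Γ L (W \ {v})) : IsNonevasive Γ L W

namespace IsNonevasive

variable {Γ : SimpleGraph V} {L : Set V}

lemma insert_of_adj {v : V} (hv : v ∈ L) {T : Set V} (hT : T.Finite)
    (hadj : ∀ w ∈ T, Γ.Adj v w) : IsNonevasive Γ L (insert v T) := by
  suffices h : ∀ U ⊆ T, IsNonevasive Γ L (insert v U) from h T subset_rfl
  induction T, hT using Set.Finite.induction_on with
  | empty => exact fun U hU => by simpa [Set.subset_empty_iff.1 hU] using singleton hv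
  | @insert u T _ _ ih =>
    intro U hU
    have hvu : Γ.Adj v u := hadj u (Set.mem_insert u T)
    replace ih := ih fun w hw => hadj w (Set.mem_insert_of_mem u hw)
    by_cases hu : u ∈ U
    · have hdel : insert v U \ {u} = insert v (U \ {u}) :=
        Set.insert_sdiff_of_notMem U hvu.ne
      have hlink : insert v U ∩ Γ.neighborSet u = insert v (U ∩ Γ.neighborSet u) :=
        Set.insert_inter_of_mem hvu.symm
      refine of_vertex (Set.mem_insert_of_mem v hu) ?_ ?_
      · rw [hlink]
        exact ih _ fun w hw => Set.mem_of_mem_insert_of_ne (hU hw.1) (Γ.ne_of_adj hw.2).symm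
      · rw [hdel]
        exact ih _ (Set.sdiff_singleton_subset_iff.2 hU)
    · exact ih U ((Set.subset_insert_iff_of_notMem hu).1 hU)

lemma union_of_adj {W : Set V} (hW : IsNonevasive Γ L W) {T : Set V} (hT : T.Finite)
    (hadj : ∀ u ∈ T, ∀ w ∈ W, Γ.Adj u w) : IsNonevasive Γ L (T ∪ W) := by
  induction hW with
  | singleton hv =>
    rw [Set.union_singleton]
    exact insert_of_adj hv hT fun u hu => (hadj u hu _ rfl).symm
  | @of_vertex W v hv _ _ ihlink ihdel =>
    have hTv : T ⊆ Γ.neighborSet v := fun u hu => (hadj u hu v hv).symm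
    have hlink : (T ∪ W) ∩ Γ.neighborSet v = T ∪ W ∩ Γ.neighborSet v := by
      rw [Set.union_inter_distrib_right, Set.inter_eq_left.2 hTv]
    have hdel : (T ∪ W) \ {v} = T ∪ W \ {v} := by
      rw [Set.union_sdiff_distrib, Set.sdiff_singleton_eq_self fun hvT => Γ.irrefl (hTv hvT)]
    refine of_vertex (Or.inr hv) ?_ ?_
    · rw [hlink]
      exact ihlink fun u hu w hw => hadj u hu w hw.1
    · rw [hdel]
      exact ihdel fun u hu w hw => hadj u hu w hw.1

lemma image {V' : Type*} {Γ' : SimpleGraph V'} {W : Set V} (φ : Γ ↪g Γ') {L' : Set V'}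
    (hL : L ⊆ φ ⁻¹' L') (hW : IsNonevasive Γ L W) : IsNonevasive Γ' L' (φ '' W) := by
  induction hW with
  | singleton hv =>
    rw [Set.image_singleton]
    exact singleton (hL hv)
  | @of_vertex W v hv _ _ ihlink ihdel =>
    have hlink : φ '' W ∩ Γ'.neighborSet (φ v) = φ '' (W ∩ Γ.neighborSet v) := by
      ext w
      constructor
      · rintro ⟨⟨u, hu, rfl⟩, huv⟩
        exact ⟨u, ⟨hu, φ.map_adj_iff.1 huv⟩, rfl⟩
      · rintro ⟨u, ⟨hu, huv⟩, rfl⟩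
        exact ⟨⟨u, hu, rfl⟩, φ.map_adj_iff.2 huv⟩
    refine of_vertex (Set.mem_image_of_mem φ hv) (hlink ▸ ihlink) ?_
    rwa [← Set.image_singleton, ← Set.image_sdiff φ.injective]

lemma pathGraph_four {L : Set (Fin 4)} (h₁ : 1 ∈ L) (h₂ : 2 ∈ L) :
    IsNonevasive (pathGraph 4) L Set.univ := by
  have hlink₀ : Set.univ ∩ (pathGraph 4).neighborSet 0 = {1} := by
    ext i; fin_cases i <;> simp [pathGraph_adj]
  have hlink₃ : (Set.univ \ {0} : Set (Fin 4)) ∩ (pathGraph 4).neighborSet 3 = {2} := by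
    ext i; fin_cases i <;> simp [pathGraph_adj]
  have hlink₁ : ((Set.univ \ {0}) \ {3} : Set (Fin 4)) ∩ (pathGraph 4).neighborSet 1 = {2} := by
    ext i; fin_cases i <;> simp [pathGraph_adj]
  have hdel : (((Set.univ \ {0}) \ {3}) \ {1} : Set (Fin 4)) = {2} := by
    ext i; fin_cases i <;> simp
  refine of_vertex (Set.mem_univ 0) (hlink₀ ▸ singleton h₁) ?_
  refine of_vertex (v := 3) (by simp) (hlink₃ ▸ singleton h₂) ?_
  exact of_vertex (v := 1) (by simp) (hlink₁ ▸ singleton h₂) (hdel ▸ singleton h₂)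

end IsNonevasive

variable {V₁ V₂ : Type*}

/-- The join of two graphs: every vertex of the one is adjacent to every vertex of the other. -/
def graphJoin (Γ₁ : SimpleGraph V₁) (Γ₂ : SimpleGraph V₂) : SimpleGraph (V₁ ⊕ V₂) :=
  (Γ₁ ⊕g Γ₂) ⊔ completeBipartiteGraph V₁ V₂

lemma IsNonevasive.join [Finite V₁] (Γ₁ : SimpleGraph V₁) {Γ₂ : SimpleGraph V₂}
    {L : Set (V₁ ⊕ V₂)} (h : IsNonevasive Γ₂ (Sum.inr ⁻¹' L) Set.univ) :
    IsNonevasive (graphJoin Γ₁ Γ₂) L Set.univ := by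
  let φ : Γ₂ ↪g graphJoin Γ₁ Γ₂ := ⟨Function.Embedding.inr, by simp [graphJoin]⟩
  have h' := (h.image φ subset_rfl).union_of_adj (Set.finite_range (Sum.inl : V₁ → V₁ ⊕ V₂)) (by
    rintro _ ⟨v, rfl⟩ _ ⟨w, -, rfl⟩
    exact Or.inr (by simp [φ]))
  rw [← Set.range_inl_union_range_inr, ← Set.image_univ (f := Sum.inr)]
  exact h'

end Nonevasive

section ArtinKernels

variable {V : Type*} {k G : Type u} [CommRing k] [IsNoetherianRing k] [Group G]
  {Γ : SimpleGraph V} {ι : V → G}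

namespace IsRightAngledArtinGroup

lemma hasFiniteHomology_ker_quotient_vertexSubgroup
    (hG : IsRightAngledArtinGroup Γ ι) (f : G →* Multiplicative ℤ) {W : Set V}
    (hW : IsNonevasive Γ {v | f (ι v) ≠ 1} W) :
    HasFiniteHomology (Rep.ofMulAction k f.ker (G ⧸ vertexSubgroup ι W)) := by
  induction hW with
  | singleton hv =>
    rw [vertexSubgroup_singleton]
    exact hasFiniteHomology_ker_quotient_zpowers hv
  | of_vertex hv _ _ ihlink ihdel => exact hG.hasFiniteHomology_of_vertex hv ihlink ihdel

lemma hasFiniteHomology_trivial_ker (hG : IsRightAngledArtinGroup Γ ι)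
    (f : G →* Multiplicative ℤ) (hΓ : IsNonevasive Γ {v | f (ι v) ≠ 1} Set.univ) :
    HasFiniteHomology (Rep.trivial k f.ker k) := by
  have h := hG.hasFiniteHomology_ker_quotient_vertexSubgroup (k := k) f hΓ
  rw [vertexSubgroup, Set.image_univ, hG.closure_range] at h
  have := QuotientGroup.subsingleton_quotient_top (G := G)
  exact h.of_retract (.ofIso (Rep.ofMulActionSubsingletonIsoTrivial k f.ker
    (G ⧸ (⊤ : Subgroup G))).symm)

end IsRightAngledArtinGroup

end ArtinKernels

theorem homology_of_kernel_fg_general {V : Type*} {G : Type} [Group G] {Γ : SimpleGraph V}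
    {ι : V → G} (hG : IsRightAngledArtinGroup Γ ι) (f : G →* Multiplicative ℤ)
    (hΓ : IsNonevasive Γ {v | f (ι v) ≠ 1} Set.univ) (n : ℕ) :
    AddGroup.FG (groupHomologyZ f.ker n) := by
  have := hG.hasFiniteHomology_trivial_ker (k := ℤ) f hΓ n
  exact Module.Finite.iff_addGroup_fg.1
    (Module.Finite.equiv (groupHomologyZAddEquiv f.ker n).symm.toIntLinearEquiv)

section DirectProducts

lemma commute_map_of_closure_eq_top {G₁ G₂ H : Type*} [Group G₁] [Group G₂] [Group H]
    {s₁ : Set G₁} {s₂ : Set G₂} (h₁ : Subgroup.closure s₁ = ⊤) (h₂ : Subgroup.closure s₂ = ⊤)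
    {F₁ : G₁ →* H} {F₂ : G₂ →* H} (h : ∀ x ∈ s₁, ∀ y ∈ s₂, Commute (F₁ x) (F₂ y)) (x : G₁)
    (y : G₂) : Commute (F₁ x) (F₂ y) := by
  have hle : F₁.range ≤ Subgroup.centralizer F₂.range := by
    rw [MonoidHom.range_eq_map, MonoidHom.range_eq_map, ← h₁, ← h₂, MonoidHom.map_closure,
      MonoidHom.map_closure, Subgroup.centralizer_closure, Subgroup.closure_le]
    rintro _ ⟨x, hx, rfl⟩
    refine Subgroup.mem_centralizer_iff.2 ?_
    rintro _ ⟨y, hy, rfl⟩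
    exact (h x hx y hy).symm.eq
  exact (Subgroup.mem_centralizer_iff.1 (hle ⟨x, rfl⟩) _ ⟨y, rfl⟩).symm

lemma closure_range_elim_inl_inr {G₁ G₂ V₁ V₂ : Type*} [Group G₁] [Group G₂] {ι₁ : V₁ → G₁}
    {ι₂ : V₂ → G₂} (h₁ : Subgroup.closure (Set.range ι₁) = ⊤)
    (h₂ : Subgroup.closure (Set.range ι₂) = ⊤) :
    Subgroup.closure (Set.range (Sum.elim (fun u => (ι₁ u, (1 : G₂))) fun u => ((1 : G₁), ι₂ u))) =
      ⊤ := by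
  have hl : Subgroup.closure (Set.range fun u => (ι₁ u, (1 : G₂))) =
      (⊤ : Subgroup G₁).map (MonoidHom.inl G₁ G₂) := by
    rw [← h₁, MonoidHom.map_closure, ← Set.range_comp]
    rfl
  have hr : Subgroup.closure (Set.range fun u => ((1 : G₁), ι₂ u)) =
      (⊤ : Subgroup G₂).map (MonoidHom.inr G₁ G₂) := by
    rw [← h₂, MonoidHom.map_closure, ← Set.range_comp]
    rfl
  rw [Set.Sum.elim_range, Subgroup.closure_union, hl, hr, eq_top_iff]
  rintro ⟨x, y⟩ -
  rw [← Prod.fst_mul_snd (x, y)]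
  exact Subgroup.mul_mem_sup ⟨x, trivial, rfl⟩ ⟨y, trivial, rfl⟩

lemma IsRightAngledArtinGroup.prod {G₁ G₂ : Type u} {V₁ V₂ : Type*} [Group G₁] [Group G₂]
    {Γ₁ : SimpleGraph V₁} {Γ₂ : SimpleGraph V₂} {ι₁ : V₁ → G₁} {ι₂ : V₂ → G₂}
    (h₁ : IsRightAngledArtinGroup Γ₁ ι₁) (h₂ : IsRightAngledArtinGroup Γ₂ ι₂) :
    IsRightAngledArtinGroup (graphJoin Γ₁ Γ₂)
      (Sum.elim (fun u => (ι₁ u, (1 : G₂))) fun u => ((1 : G₁), ι₂ u)) where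
  closure_range := closure_range_elim_inl_inr h₁.closure_range h₂.closure_range
  commute := by
    rintro (u | u) (v | v) h
    · exact (h₁.commute u v (by simpa [graphJoin] using h)).prod (.one_left 1)
    · exact (Commute.one_right _).prod (.one_left _)
    · exact (Commute.one_left _).prod (.one_right _)
    · exact (Commute.one_left 1).prod (h₂.commute u v (by simpa [graphJoin] using h))
  exists_lift H _ φ hφ := by
    obtain ⟨F₁, hF₁⟩ := h₁.exists_lift H (φ ∘ Sum.inl) fun u v h =>
      hφ (.inl u) (.inl v) (by simp [graphJoin, h])
    obtain ⟨F₂, hF₂⟩ := h₂.exists_lift H (φ ∘ Sum.inr) fun u v h =>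
      hφ (.inr u) (.inr v) (by simp [graphJoin, h])
    have hcomm := commute_map_of_closure_eq_top h₁.closure_range h₂.closure_range
      (F₁ := F₁) (F₂ := F₂) (by
        rintro _ ⟨u, rfl⟩ _ ⟨v, rfl⟩
        rw [hF₁, hF₂]
        exact hφ (.inl u) (.inr v) (by simp [graphJoin]))
    refine ⟨F₁.noncommCoprod F₂ hcomm, ?_⟩
    rintro (u | u)
    · simp [hF₁]
    · simp [hF₂]

end DirectProducts

section PathOnFourVertices

lemma commute_of_commRel_mem_p4Rels {i j : Fin 4} (h : commRel i j ∈ p4Rels) :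
    Commute (PresentedGroup.of i : P4) (PresentedGroup.of j) := by
  have hone := PresentedGroup.one_of_mem h
  simp only [commRel, map_mul, map_inv] at hone
  exact mul_inv_eq_iff_eq_mul.1 (mul_inv_eq_one.1 hone)

lemma isRightAngledArtinGroup_P4 :
    IsRightAngledArtinGroup (SimpleGraph.pathGraph 4) (PresentedGroup.of : Fin 4 → P4) where
  closure_range := PresentedGroup.closure_range_of _
  commute u v huv := by
    wlog h : u.val + 1 = v.val generalizing u v
    · exact (this v u huv.symm ((SimpleGraph.pathGraph_adj.1 huv).resolve_left h)).symm
    have hmem : commRel u v ∈ p4Rels := by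
      fin_cases u <;> fin_cases v <;> simp_all [p4Rels]
    exact commute_of_commRel_mem_p4Rels hmem
  exists_lift H _ φ hφ := by
    have hrel (i j : Fin 4) (h : (SimpleGraph.pathGraph 4).Adj i j) :
        FreeGroup.lift φ (commRel i j) = 1 := by
      simp [commRel, (hφ i j h).eq]
    refine ⟨PresentedGroup.toGroup (f := φ) ?_, fun v => PresentedGroup.toGroup.of _⟩
    rintro r (rfl | rfl | rfl) <;> exact hrel _ _ (by simp [SimpleGraph.pathGraph_adj])

end PathOnFourVertices

theorem homology_of_kernel_fg
    (f : P4 × P4 →* Multiplicative ℤ)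
    (ha : f ((PresentedGroup.of 0 : P4), 1) = Multiplicative.ofAdd (1 : ℤ))
    (hb : f ((PresentedGroup.of 1 : P4), 1) = Multiplicative.ofAdd (1 : ℤ))
    (hc : f ((PresentedGroup.of 2 : P4), 1) = Multiplicative.ofAdd (0 : ℤ))
    (hd : f ((PresentedGroup.of 3 : P4), 1) = Multiplicative.ofAdd (1 : ℤ))
    (ha' : f (1, (PresentedGroup.of 0 : P4)) = Multiplicative.ofAdd (1 : ℤ))
    (hb' : f (1, (PresentedGroup.of 1 : P4)) = Multiplicative.ofAdd (1 : ℤ))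
    (hc' : f (1, (PresentedGroup.of 2 : P4)) = Multiplicative.ofAdd (1 : ℤ))
    (hd' : f (1, (PresentedGroup.of 3 : P4)) = Multiplicative.ofAdd (1 : ℤ)) :
    ∀ n : ℕ, AddGroup.FG (groupHomologyZ f.ker n) :=
  homology_of_kernel_fg_general (isRightAngledArtinGroup_P4.prod isRightAngledArtinGroup_P4) f
    (.join _ (.pathGraph_four (by simp [hb']) (by simp [hc'])))
end
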